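/- arXiv:math/0504600 — 2 statements merged into one kernel-verified Lean document; each statement's English description precedes it below -/
import Mathlib

section
/- Let k > 0 and λ ∈ ℝ, and set f_λ(x) = α·∫_{−1}^{1} exp(λxt)·(1−t)^{k−1}·(1+t)^{k} dt (= χ applied to x ↦ exp(λx)). Then: (a) f_λ(0) = 1, f_λ is differentiable, and f_λ'(x) + k·(f_λ(x) − f_λ(−x))/x = λ·f_λ(x) for every x ≠ 0; (b) f_λ is the unique solution among absolutely convergent power series: if (aₙ) is a sequence of reals with ∑ₙ |aₙ| < ∞ such that f(x) = ∑_{n≥0} aₙxⁿ satisfies f(0) = 1 and f'(x) + k·(f(x) − f(−x))/x = λ·f(x) for all x ∈ (−1,1) with x ≠ 0, then f(x) = f_λ(x) for all x ∈ (−1,1). -/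
open Polynomial intervalIntegral

/-- The normalizing constant `α = (∫_{-1}^{1} (1-t)^(k-1) (1+t)^k dt)⁻¹`. -/
noncomputable def dunklAlpha (k : ℝ) : ℝ :=
  (∫ t in (-1 : ℝ)..1, (1 - t) ^ (k - 1) * (1 + t) ^ k)⁻¹

/-- `f_λ(x) = α ∫_{-1}^{1} exp(λ x t) (1-t)^(k-1) (1+t)^k dt`, i.e. `χ` applied to
`x ↦ exp (λ x)`. -/
noncomputable def dunklBessel (k lam : ℝ) (x : ℝ) : ℝ :=
  dunklAlpha k * ∫ t in (-1 : ℝ)..1, Real.exp (lam * (x * t)) * (1 - t) ^ (k - 1) * (1 + t) ^ k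

/-!
Write `w(t) = (1 - t)^(k-1) (1 + t)^k` and `T` for the Dunkl operator.

Existence: `χ` intertwines `T` with `d/dx`, that is `T (χ f) = χ (f')`. Indeed the substitution
`t ↦ -t` gives `χ f(x) - χ f(-x) = α ∫ f(xt) (w(t) - w(-t)) dt`, and `-k (w(t) - w(-t))` is the
derivative of `(1 - t)^k (1 + t)^k = (1 - t) w(t)`, which vanishes at `±1`. Integrating by parts,
`k (χ f(x) - χ f(-x)) / x = α ∫ f'(xt) (1 - t) w(t) dt`, which complements
`(χ f)'(x) = α ∫ t f'(xt) w(t) dt` to `χ (f')(x)`. Apply this to `f(x) = exp(λx)`.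

Uniqueness: if `T g = λ g` and `g(0) = 0`, the energy `E(x) = g(x)² + g(-x)²` satisfies
`E' = 2λ (g(x)² - g(-x)²) - 2k (g(x) - g(-x))² / x ≤ 2|λ| E` for `x > 0`, so `E = 0` by Grönwall.
-/

open MeasureTheory Set
open scoped NNReal

theorem hasDerivAt_integral_comp_mul_mul {f w : ℝ → ℝ} {a b : ℝ} (hf : ContDiff ℝ 1 f)
    (hw : IntervalIntegrable w volume a b) (x : ℝ) :
    HasDerivAt (fun y => ∫ t in a..b, f (y * t) * w t)
      (∫ t in a..b, deriv f (x * t) * (t * w t)) x := by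
  have hf' : Continuous (deriv f) := hf.continuous_deriv_one
  have hint (y : ℝ) : IntervalIntegrable (fun t => f (y * t) * w t) volume a b :=
    hw.continuousOn_mul (hf.continuous.comp (by fun_prop)).continuousOn
  have hint' : IntervalIntegrable (fun t => deriv f (x * t) * (t * w t)) volume a b :=
    (hw.continuousOn_mul continuousOn_id).continuousOn_mul (hf'.comp (by fun_prop)).continuousOn
  obtain ⟨C, hC⟩ : ∃ C, ∀ p ∈ Metric.closedBall x 1 ×ˢ uIcc a b,
      ‖deriv f (p.1 * p.2) * p.2‖ ≤ C :=
    ((isCompact_closedBall x 1).prod isCompact_uIcc).exists_bound_of_continuousOn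
      (by fun_prop : Continuous fun p : ℝ × ℝ => deriv f (p.1 * p.2) * p.2).continuousOn
  refine (hasDerivAt_integral_of_dominated_loc_of_deriv_le
    (F' := fun y t => deriv f (y * t) * (t * w t)) (bound := fun t => C * ‖w t‖)
    (Metric.closedBall_mem_nhds x one_pos)
    (.of_forall fun y => (hint y).def'.aestronglyMeasurable) (hint x)
    hint'.def'.aestronglyMeasurable (.of_forall fun t ht y hy => ?_) (hw.norm.const_mul C)
    (.of_forall fun t _ y _ => ?_)).2
  · rw [← mul_assoc, norm_mul]
    exact mul_le_mul_of_nonneg_right (hC (y, t) ⟨hy, uIoc_subset_uIcc ht⟩) (norm_nonneg _)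
  · have hcomp : HasDerivAt (fun y => f (y * t)) (deriv f (y * t) * t) y :=
      (hf.differentiable_one (y * t)).hasDerivAt.comp y (hasDerivAt_mul_const t)
    simpa only [mul_assoc] using hcomp.mul_const (w t)

theorem nonpos_of_hasDerivAt_le_mul {E E' : ℝ → ℝ} {a b K : ℝ} (hc : ContinuousOn E (Ico a b))
    (hd : ∀ x ∈ Ioo a b, HasDerivAt E (E' x) x) (hle : ∀ x ∈ Ioo a b, E' x ≤ K * E x)
    (ha : E a ≤ 0) : ∀ x ∈ Ico a b, E x ≤ 0 := by
  intro x hx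
  have hderiv : ∀ y ∈ interior (Ico a b), HasDerivAt (fun y => Real.exp (-K * y) * E y)
      (Real.exp (-K * y) * (E' y - K * E y)) y := by
    intro y hy
    rw [interior_Ico] at hy
    refine ((hasDerivAt_const_mul (-K)).exp.fun_mul (hd y hy)).congr_deriv ?_
    ring
  have hanti : AntitoneOn (fun y => Real.exp (-K * y) * E y) (Ico a b) := by
    refine antitoneOn_of_hasDerivWithinAt_nonpos (convex_Ico a b) (by fun_prop)
      (fun y hy => (hderiv y hy).hasDerivWithinAt) fun y hy => ?_
    rw [interior_Ico] at hy
    exact mul_nonpos_of_nonneg_of_nonpos (Real.exp_pos _).le (sub_nonpos.mpr (hle y hy))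
  have hscaled : Real.exp (-K * x) * E x ≤ 0 :=
    (hanti (left_mem_Ico.mpr (hx.1.trans_lt hx.2)) hx hx.1).trans
      (mul_nonpos_of_nonneg_of_nonpos (Real.exp_pos _).le ha)
  exact nonpos_of_mul_nonpos_right hscaled (Real.exp_pos _)

theorem differentiableOn_tsum_mul_pow {𝕜 : Type*} [NontriviallyNormedField 𝕜] [CompleteSpace 𝕜]
    {a : ℕ → 𝕜} {r : ℝ≥0} {C : ℝ} (h : ∀ n, ‖a n‖ * r ^ n ≤ C) :
    DifferentiableOn 𝕜 (fun x => ∑' n, a n * x ^ n) (Metric.ball 0 r) := by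
  set p := FormalMultilinearSeries.ofScalars 𝕜 a
  have hr : r ≤ p.radius := p.le_radius_of_bound C fun n => by
    rw [FormalMultilinearSeries.ofScalars_norm]
    exact h n
  have hsum : p.sum = fun x => ∑' n, a n * x ^ n :=
    funext (FormalMultilinearSeries.ofScalars_sum_eq a)
  rw [← hsum, ← Metric.eball_coe]
  intro x hx
  have hpos : 0 < p.radius := (pos_of_gt hx).trans_le hr
  exact ((p.hasFPowerSeriesOnBall hpos).differentiableOn.mono (Metric.eball_subset_eball hr)) x hx

theorem differentiableAt_tsum_mul_pow_of_summable_norm {𝕜 : Type*} [NontriviallyNormedField 𝕜]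
    [CompleteSpace 𝕜] {a : ℕ → 𝕜} (ha : Summable fun n => ‖a n‖) {x : 𝕜} (hx : ‖x‖ < 1) :
    DifferentiableAt 𝕜 (fun y => ∑' n, a n * y ^ n) x := by
  have hbound : ∀ n, ‖a n‖ * (1 : ℝ≥0) ^ n ≤ ∑' m, ‖a m‖ := fun n => by
    simpa using ha.le_tsum n fun m _ => norm_nonneg (a m)
  exact (differentiableOn_tsum_mul_pow hbound).differentiableAt
    (Metric.isOpen_ball.mem_nhds (mem_ball_zero_iff.mpr hx))

section Weight

/-- The weight `w(t) = (1 - t)^(k-1) (1 + t)^k` on `[-1, 1]` that defines `α` and `χ`. -/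
noncomputable def dunklWeight (k t : ℝ) : ℝ := (1 - t) ^ (k - 1) * (1 + t) ^ k

variable {k : ℝ}

theorem intervalIntegrable_dunklWeight (hk : 0 < k) :
    IntervalIntegrable (dunklWeight k) volume (-1) 1 := by
  have hleft : IntervalIntegrable (fun t : ℝ => (1 - t) ^ (k - 1)) volume (1 - 2) (1 - 0) :=
    (intervalIntegrable_rpow' (by linarith)).comp_sub_left 1
  norm_num only at hleft
  have hright : Continuous fun t : ℝ => (1 + t) ^ k :=
    .rpow_const (by fun_prop) fun _ => .inr hk.le
  exact hleft.mul_continuousOn hright.continuousOn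

theorem intervalIntegrable_dunklWeight_neg (hk : 0 < k) :
    IntervalIntegrable (fun t => dunklWeight k (-t)) volume (-1) 1 := by
  simpa only [zero_sub, neg_neg] using ((intervalIntegrable_dunklWeight hk).comp_sub_left 0).symm

theorem integral_dunklWeight_pos (hk : 0 < k) : 0 < ∫ t in (-1 : ℝ)..1, dunklWeight k t := by
  refine intervalIntegral_pos_of_pos_on (intervalIntegrable_dunklWeight hk) ?_ (by norm_num)
  rintro t ⟨hneg, hpos⟩
  exact mul_pos (Real.rpow_pos_of_pos (by linarith) _) (Real.rpow_pos_of_pos (by linarith) _)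

theorem one_sub_mul_dunklWeight (hk : k ≠ 0) {t : ℝ} (ht : t ≤ 1) :
    (1 - t) * dunklWeight k t = (1 - t) ^ k * (1 + t) ^ k := by
  have hrpow := Real.rpow_one_add' (x := 1 - t) (y := k - 1) (by linarith) (by simpa using hk)
  rw [add_sub_cancel] at hrpow
  rw [hrpow, dunklWeight, mul_assoc]

theorem hasDerivAt_one_sub_rpow_mul_one_add_rpow {t : ℝ} (ht : t ∈ Ioo (-1 : ℝ) 1) :
    HasDerivAt (fun s => (1 - s) ^ k * (1 + s) ^ k)
      (-(k * (dunklWeight k t - dunklWeight k (-t)))) t := by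
  have hsub : 1 - t ≠ 0 := by linarith [ht.2]
  have hadd : 1 + t ≠ 0 := by linarith [ht.1]
  have hsub' : HasDerivAt (fun s : ℝ => (1 - s) ^ k) (-1 * k * (1 - t) ^ (k - 1)) t :=
    ((hasDerivAt_id t).const_sub 1).rpow_const (.inl hsub)
  have hadd' : HasDerivAt (fun s : ℝ => (1 + s) ^ k) (1 * k * (1 + t) ^ (k - 1)) t :=
    ((hasDerivAt_id t).const_add 1).rpow_const (.inl hadd)
  refine (hsub'.fun_mul hadd').congr_deriv ?_
  simp only [dunklWeight, sub_neg_eq_add, ← sub_eq_add_neg]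
  ring

theorem integral_deriv_mul_one_sub_mul_dunklWeight (hk : 0 < k) {f : ℝ → ℝ}
    (hf : ContDiff ℝ 1 f) :
    ∫ t in (-1 : ℝ)..1, deriv f t * ((1 - t) * dunklWeight k t) =
      k * ∫ t in (-1 : ℝ)..1, f t * (dunklWeight k t - dunklWeight k (-t)) := by
  have hcont : Continuous fun t : ℝ => (1 - t) ^ k * (1 + t) ^ k :=
    .mul (.rpow_const (by fun_prop) fun _ => .inr hk.le)
      (.rpow_const (by fun_prop) fun _ => .inr hk.le)
  have hparts := integral_mul_deriv_eq_deriv_mul_of_hasDerivAt (a := -1) (b := 1)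
    hf.continuous.continuousOn hcont.continuousOn
    (fun t _ => (hf.differentiable_one t).hasDerivAt)
    (fun t ht => hasDerivAt_one_sub_rpow_mul_one_add_rpow (by simpa using ht))
    (hf.continuous_deriv_one.intervalIntegrable _ _) (((intervalIntegrable_dunklWeight hk).sub
      (intervalIntegrable_dunklWeight_neg hk)).const_mul k).neg
  have hcongr : ∫ t in (-1 : ℝ)..1, deriv f t * ((1 - t) * dunklWeight k t) =
      ∫ t in (-1 : ℝ)..1, deriv f t * ((1 - t) ^ k * (1 + t) ^ k) := by
    refine integral_congr fun t ht => ?_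
    rw [uIcc_of_le (by norm_num)] at ht
    simp only [one_sub_mul_dunklWeight hk.ne' ht.2]
  simp only [mul_neg, mul_left_comm _ k, intervalIntegral.integral_neg,
    intervalIntegral.integral_const_mul, sub_self,
    add_neg_cancel, Real.zero_rpow hk.ne', zero_mul, mul_zero] at hparts
  linarith

end Weight

section Dunkl

/-- The Dunkl operator `T f(x) = f'(x) + k (f(x) - f(-x)) / x`. As `0 / 0 = 0`, its value at
`x = 0` is `f'(0)` and not the limit `(2k + 1) f'(0)`. -/
noncomputable def dunklOperator (k : ℝ) (f : ℝ → ℝ) (x : ℝ) : ℝ :=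
  deriv f x + k * (f x - f (-x)) / x

/-- The Dunkl intertwining operator `χ f(x) = α ∫_{-1}^{1} f(xt) (1 - t)^(k-1) (1 + t)^k dt`. -/
noncomputable def dunklIntertwining (k : ℝ) (f : ℝ → ℝ) (x : ℝ) : ℝ :=
  dunklAlpha k * ∫ t in (-1 : ℝ)..1, f (x * t) * dunklWeight k t

variable {k x : ℝ} {f g : ℝ → ℝ}

theorem dunklOperator_sub (hf : DifferentiableAt ℝ f x) (hg : DifferentiableAt ℝ g x) :
    dunklOperator k (f - g) x = dunklOperator k f x - dunklOperator k g x := by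
  simp only [dunklOperator, deriv_sub hf hg, Pi.sub_apply]
  ring

theorem dunklIntertwining_apply_zero (hk : 0 < k) (f : ℝ → ℝ) : dunklIntertwining k f 0 = f 0 := by
  have halpha : dunklAlpha k = (∫ t in (-1 : ℝ)..1, dunklWeight k t)⁻¹ := rfl
  simp only [dunklIntertwining, zero_mul, intervalIntegral.integral_const_mul, halpha]
  field_simp [(integral_dunklWeight_pos hk).ne']

theorem dunklIntertwining_const_mul (k c : ℝ) (f : ℝ → ℝ) (x : ℝ) :
    dunklIntertwining k (fun y => c * f y) x = c * dunklIntertwining k f x := by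
  simp only [dunklIntertwining, mul_assoc c, intervalIntegral.integral_const_mul]
  ring

theorem hasDerivAt_dunklIntertwining (hk : 0 < k) (hf : ContDiff ℝ 1 f) (x : ℝ) :
    HasDerivAt (dunklIntertwining k f)
      (dunklAlpha k * ∫ t in (-1 : ℝ)..1, deriv f (x * t) * (t * dunklWeight k t)) x :=
  (hasDerivAt_integral_comp_mul_mul hf (intervalIntegrable_dunklWeight hk) x).const_mul _

theorem dunklIntertwining_apply_neg (k : ℝ) (f : ℝ → ℝ) (x : ℝ) :
    dunklIntertwining k f (-x) =
      dunklAlpha k * ∫ t in (-1 : ℝ)..1, f (x * t) * dunklWeight k (-t) := by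
  have hsubst := integral_comp_neg (a := -1) (b := 1) fun t => f (-x * t) * dunklWeight k t
  simp only [neg_mul_neg, neg_neg] at hsubst
  rw [dunklIntertwining, hsubst]

theorem mul_dunklIntertwining_sub_neg (hk : 0 < k) (hf : ContDiff ℝ 1 f) (x : ℝ) :
    k * (dunklIntertwining k f x - dunklIntertwining k f (-x)) =
      x * (dunklAlpha k *
        ∫ t in (-1 : ℝ)..1, deriv f (x * t) * ((1 - t) * dunklWeight k t)) := by
  have hcont : Continuous fun t => f (x * t) := hf.continuous.comp (by fun_prop)
  have hint := (intervalIntegrable_dunklWeight hk).continuousOn_mul hcont.continuousOn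
  have hint_neg := (intervalIntegrable_dunklWeight_neg hk).continuousOn_mul hcont.continuousOn
  calc k * (dunklIntertwining k f x - dunklIntertwining k f (-x))
      = dunklAlpha k *
          (k * ∫ t in (-1 : ℝ)..1, f (x * t) * (dunklWeight k t - dunklWeight k (-t))) := by
        simp only [mul_sub (f _), integral_sub hint hint_neg]
        rw [dunklIntertwining_apply_neg, dunklIntertwining]
        ring
    _ = dunklAlpha k * ∫ t in (-1 : ℝ)..1,
          deriv (fun s => f (x * s)) t * ((1 - t) * dunklWeight k t) := by
        rw [integral_deriv_mul_one_sub_mul_dunklWeight hk (f := fun s => f (x * s)) (by fun_prop)]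
    _ = x * (dunklAlpha k *
          ∫ t in (-1 : ℝ)..1, deriv f (x * t) * ((1 - t) * dunklWeight k t)) := by
        simp only [deriv_comp_mul_left, smul_eq_mul, mul_assoc x,
          intervalIntegral.integral_const_mul]
        ring

theorem dunklOperator_dunklIntertwining (hk : 0 < k) (hf : ContDiff ℝ 1 f) (hx : x ≠ 0) :
    dunklOperator k (dunklIntertwining k f) x = dunklIntertwining k (deriv f) x := by
  have hw := intervalIntegrable_dunklWeight hk
  have hcont : Continuous fun t => deriv f (x * t) :=
    hf.continuous_deriv_one.comp (by fun_prop)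
  have hint : IntervalIntegrable (fun t => deriv f (x * t) * (t * dunklWeight k t))
      volume (-1) 1 :=
    (hw.continuousOn_mul continuousOn_id).continuousOn_mul hcont.continuousOn
  have hint_sub : IntervalIntegrable (fun t => deriv f (x * t) * ((1 - t) * dunklWeight k t))
      volume (-1) 1 :=
    (hw.continuousOn_mul (by fun_prop)).continuousOn_mul hcont.continuousOn
  rw [dunklOperator, (hasDerivAt_dunklIntertwining hk hf x).deriv,
    mul_dunklIntertwining_sub_neg hk hf, mul_div_cancel_left₀ _ hx, ← mul_add,
    ← integral_add hint hint_sub, dunklIntertwining]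
  congr! 3 with t
  ring

end Dunkl

section Bessel

variable {k x : ℝ}

theorem dunklIntertwining_exp (k lam : ℝ) :
    dunklIntertwining k (fun y => Real.exp (lam * y)) = dunklBessel k lam := by
  funext x
  simp only [dunklIntertwining, dunklBessel, dunklWeight, mul_assoc]

theorem dunklBessel_apply_zero (hk : 0 < k) (lam : ℝ) : dunklBessel k lam 0 = 1 := by
  rw [← dunklIntertwining_exp, dunklIntertwining_apply_zero hk, mul_zero, Real.exp_zero]

theorem differentiable_dunklBessel (hk : 0 < k) (lam : ℝ) :
    Differentiable ℝ (dunklBessel k lam) := by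
  rw [← dunklIntertwining_exp]
  exact fun x => (hasDerivAt_dunklIntertwining hk (by fun_prop) x).differentiableAt

theorem dunklOperator_dunklBessel (hk : 0 < k) (lam : ℝ) (hx : x ≠ 0) :
    dunklOperator k (dunklBessel k lam) x = lam * dunklBessel k lam x := by
  have hderiv : deriv (fun y => Real.exp (lam * y)) = fun y => lam * Real.exp (lam * y) := by
    funext y
    rw [(hasDerivAt_const_mul lam).exp.deriv, mul_comm]
  rw [← dunklIntertwining_exp, dunklOperator_dunklIntertwining hk (by fun_prop) hx, hderiv,
    dunklIntertwining_const_mul]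

end Bessel

section Uniqueness

variable {k lam r : ℝ} {f g : ℝ → ℝ}

theorem mul_deriv_sub_mul_deriv_neg_le (hk : 0 ≤ k) {x : ℝ} (hx : 0 < x)
    (hpos : dunklOperator k g x = lam * g x) (hneg : dunklOperator k g (-x) = lam * g (-x)) :
    2 * (g x * deriv g x - g (-x) * deriv g (-x)) ≤ 2 * |lam| * (g x ^ 2 + g (-x) ^ 2) := by
  have hidentity : g x * deriv g x - g (-x) * deriv g (-x) =
      lam * (g x ^ 2 - g (-x) ^ 2) - k * (g x - g (-x)) ^ 2 / x := by
    simp only [dunklOperator, neg_neg, div_neg] at hpos hneg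
    linear_combination g x * hpos - g (-x) * hneg
  have hreflection : 0 ≤ k * (g x - g (-x)) ^ 2 / x := by positivity
  have hlam : lam * (g x ^ 2 - g (-x) ^ 2) ≤ |lam| * (g x ^ 2 + g (-x) ^ 2) := by
    rw [mul_sub, mul_add, sub_eq_add_neg, ← neg_mul]
    gcongr
    exacts [le_abs_self lam, neg_le_abs lam]
  linarith

theorem hasDerivAt_sq_add_sq_comp_neg {x g₁ g₂ : ℝ} (hpos : HasDerivAt g g₁ x)
    (hneg : HasDerivAt g g₂ (-x)) :
    HasDerivAt (fun y => g y ^ 2 + g (-y) ^ 2) (2 * (g x * g₁ - g (-x) * g₂)) x := by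
  refine ((hpos.fun_pow 2).fun_add ((hneg.comp x (hasDerivAt_neg x)).fun_pow 2)).congr_deriv ?_
  simp only [Function.comp_apply]
  ring

theorem eqOn_zero_of_dunklOperator_eq (hk : 0 ≤ k) (hc : ContinuousAt g 0) (h0 : g 0 = 0)
    (hg : ∀ x ∈ Ioo (-r) r, x ≠ 0 → DifferentiableAt ℝ g x ∧ dunklOperator k g x = lam * g x) :
    EqOn g 0 (Ioo (-r) r) := by
  have hmem {x : ℝ} (hx : x ∈ Ico 0 r) : x ∈ Ioo (-r) r := ⟨by linarith [hx.1, hx.2], hx.2⟩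
  have hsymm {x : ℝ} (hx : x ∈ Ioo (-r) r) : -x ∈ Ioo (-r) r :=
    ⟨neg_lt_neg hx.2, neg_lt.mp hx.1⟩
  have hcont : ∀ x ∈ Ioo (-r) r, ContinuousAt g x := fun x hx => by
    rcases eq_or_ne x 0 with rfl | hx0
    exacts [hc, (hg x hx hx0).1.continuousAt]
  have hg_pos (x : ℝ) (hx : x ∈ Ioo 0 r) := hg x (hmem (Ioo_subset_Ico_self hx)) hx.1.ne'
  have hg_neg (x : ℝ) (hx : x ∈ Ioo 0 r) :=
    hg (-x) (hsymm (hmem (Ioo_subset_Ico_self hx))) (neg_ne_zero.mpr hx.1.ne')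
  have henergy : ContinuousOn (fun y => g y ^ 2 + g (-y) ^ 2) (Ico 0 r) := fun x hx => by
    have hneg : ContinuousAt (fun y => g (-y)) x :=
      (hcont (-x) (hsymm (hmem hx))).comp continuousAt_neg
    exact (((hcont x (hmem hx)).pow 2).add (hneg.pow 2)).continuousWithinAt
  have hnonpos : ∀ x ∈ Ico 0 r, g x ^ 2 + g (-x) ^ 2 ≤ 0 :=
    nonpos_of_hasDerivAt_le_mul henergy
      (fun x hx => hasDerivAt_sq_add_sq_comp_neg (hg_pos x hx).1.hasDerivAt
        (hg_neg x hx).1.hasDerivAt)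
      (fun x hx => mul_deriv_sub_mul_deriv_neg_le hk hx.1 (hg_pos x hx).2 (hg_neg x hx).2)
      (by simp [h0])
  intro x hx
  have hle : g x ^ 2 + g (-x) ^ 2 ≤ 0 := by
    rcases le_total 0 x with h | h
    · exact hnonpos x ⟨h, hx.2⟩
    · simpa only [neg_neg, add_comm] using hnonpos (-x) ⟨neg_nonneg.mpr h, (hsymm hx).2⟩
  exact pow_eq_zero_iff two_ne_zero |>.mp (by linarith [sq_nonneg (g x), sq_nonneg (g (-x))])

theorem eqOn_of_dunklOperator_eq (hk : 0 ≤ k) (hfc : ContinuousAt f 0) (hgc : ContinuousAt g 0)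
    (h0 : f 0 = g 0)
    (hf : ∀ x ∈ Ioo (-r) r, x ≠ 0 → DifferentiableAt ℝ f x ∧ dunklOperator k f x = lam * f x)
    (hg : ∀ x ∈ Ioo (-r) r, x ≠ 0 → DifferentiableAt ℝ g x ∧ dunklOperator k g x = lam * g x) :
    EqOn f g (Ioo (-r) r) := by
  have hsub : EqOn (f - g) 0 (Ioo (-r) r) :=
    eqOn_zero_of_dunklOperator_eq hk (hfc.sub hgc) (sub_eq_zero.mpr h0)
      fun x hx hx0 => ⟨(hf x hx hx0).1.sub (hg x hx hx0).1, by
        rw [dunklOperator_sub (hf x hx hx0).1 (hg x hx hx0).1, (hf x hx hx0).2, (hg x hx hx0).2,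
          Pi.sub_apply, mul_sub]⟩
  exact fun x hx => sub_eq_zero.mp (hsub hx)

end Uniqueness

theorem dunkl_eigenfunction_general (k : ℝ) (hk : 0 < k) (lam : ℝ) :
    (dunklBessel k lam 0 = 1 ∧ Differentiable ℝ (dunklBessel k lam) ∧
      ∀ x : ℝ, x ≠ 0 → dunklOperator k (dunklBessel k lam) x = lam * dunklBessel k lam x) ∧
    ∀ (r : ℝ) (f : ℝ → ℝ), ContinuousAt f 0 → f 0 = 1 →
      (∀ x ∈ Ioo (-r) r, x ≠ 0 → DifferentiableAt ℝ f x ∧ dunklOperator k f x = lam * f x) →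
      EqOn f (dunklBessel k lam) (Ioo (-r) r) := by
  have hzero := dunklBessel_apply_zero hk lam
  have hdiff := differentiable_dunklBessel hk lam
  refine ⟨⟨hzero, hdiff, fun x hx => dunklOperator_dunklBessel hk lam hx⟩, ?_⟩
  intro r f hc h0 hf
  exact eqOn_of_dunklOperator_eq hk.le hc hdiff.continuous.continuousAt (h0.trans hzero.symm) hf
    fun x _ hx => ⟨hdiff x, dunklOperator_dunklBessel hk lam hx⟩

/-- For `k > 0` and `λ ∈ ℝ`: (a) `f_λ = χ(exp(λ·))` satisfies `f_λ(0) = 1`, is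
differentiable, and solves `T f = λ f` away from `0`; (b) it is the unique such
solution among absolutely convergent power series on `(-1, 1)`. -/
theorem dunkl_eigenfunction (k : ℝ) (hk : 0 < k) (lam : ℝ) :
    (dunklBessel k lam 0 = 1 ∧ Differentiable ℝ (dunklBessel k lam) ∧
      ∀ x : ℝ, x ≠ 0 →
        deriv (dunklBessel k lam) x +
            k * (dunklBessel k lam x - dunklBessel k lam (-x)) / x =
          lam * dunklBessel k lam x) ∧
    ∀ a : ℕ → ℝ, Summable (fun n => |a n|) →
      (∑' n : ℕ, a n * (0 : ℝ) ^ n) = 1 →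
      (∀ x ∈ Set.Ioo (-1 : ℝ) 1, x ≠ 0 →
        deriv (fun y : ℝ => ∑' n : ℕ, a n * y ^ n) x +
            k * ((∑' n : ℕ, a n * x ^ n) - ∑' n : ℕ, a n * (-x) ^ n) / x =
          lam * ∑' n : ℕ, a n * x ^ n) →
      ∀ x ∈ Set.Ioo (-1 : ℝ) 1, (∑' n : ℕ, a n * x ^ n) = dunklBessel k lam x := by
  refine ⟨(dunkl_eigenfunction_general k hk lam).1, fun a ha h0 hT => ?_⟩
  have hd (x : ℝ) (hx : x ∈ Ioo (-1) 1) :=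
    differentiableAt_tsum_mul_pow_of_summable_norm (a := a) ha (abs_lt.mpr hx)
  exact (dunkl_eigenfunction_general k hk lam).2 1 _ (hd 0 (by norm_num)).continuousAt h0
    fun x hx hx0 => ⟨hd x hx, hT x hx hx0⟩
end

section
/- Fix c ∈ ℂ and take t = 1. Let e = (1 + s)/2 ∈ H_{1,c}; the corner space B_{1,c} = e·H_{1,c}·e is a ℂ-algebra with multiplicative unit e under the addition and multiplication inherited from H_{1,c}. Let (e₊, h, e₋) be the standard basis of sl₂(ℂ), with [h, e₊] = 2e₊, [h, e₋] = −2e₋, [e₊, e₋] = h, and let C = e₊e₋ + e₋e₊ + (1/2)h² be the Casimir element of the universal enveloping algebra U(sl₂(ℂ)). Then there is an isomorphism of ℂ-algebras U(sl₂(ℂ))/⟨C − (1/2)(c − 1/2)(c + 3/2)⟩ ≅ B_{1,c} sending the image of e₊ to (1/2)·e·x²·e and the image of e₋ to −(1/2)·e·ξ²·e, where ⟨C − λ⟩ denotes the two-sided ideal generated by C − λ. -/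
/-!
The elements `x²/2`, `(xξ + ξx)/2` and `-ξ²/2` already form an `sl₂`-triple in `H_{1,c}`, with
Casimir element `(1/2)(c - 1/2)(c + 3/2) - (c/2)(1 - s)`; the correction term dies in the corner
because `(1 - s)e = 0`.

Surjectivity: if `N` is the subalgebra of the corner generated by the triple, then `N + xN + ξN` is
stable under left multiplication by `s`, `x`, `ξ` and contains `e`, so it is `H e`; multiplying by
`e` on the left kills the last two summands.

Injectivity: `U(sl₂)/⟨C - λ⟩` is spanned by the `e₊ⁿ f(h)` and `e₋ⁿ f(h)` with `f` a polynomial.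
Let `H_{1,c}` act by Dunkl operators on the formal powers `x^(X + n)`, `n ∈ ℤ`, whose exponent
contains an indeterminate `X`. The spanning element `wₙ f(h)` of weight `2n` sends `x^X` to
`κₙ f(X + 1/2 - c) x^(X + 2n)` with `κₙ ≠ 0`: thanks to `X`, no value of `c` is exceptional. A
combination that acts by zero on `x^X` is therefore trivial.
-/

open FreeAlgebra

/-- The defining relations of the rational Cherednik algebra `H_{t,c}` of type `A₁`,
on the free algebra on three generators `s = ι 0`, `x = ι 1`, `ξ = ι 2`:
`s² - 1`, `s x + x s`, `s ξ + ξ s` and `ξ x - x ξ - t 1 + 2 c s`. -/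
inductive CherednikRel (t c : ℂ) : FreeAlgebra ℂ (Fin 3) → FreeAlgebra ℂ (Fin 3) → Prop
  | s_sq : CherednikRel t c (ι ℂ (0 : Fin 3) * ι ℂ (0 : Fin 3) - 1) 0
  | s_x : CherednikRel t c (ι ℂ (0 : Fin 3) * ι ℂ (1 : Fin 3) + ι ℂ (1 : Fin 3) * ι ℂ (0 : Fin 3)) 0
  | s_xi : CherednikRel t c (ι ℂ (0 : Fin 3) * ι ℂ (2 : Fin 3) + ι ℂ (2 : Fin 3) * ι ℂ (0 : Fin 3)) 0
  | xi_x : CherednikRel t c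
      (ι ℂ (2 : Fin 3) * ι ℂ (1 : Fin 3) - ι ℂ (1 : Fin 3) * ι ℂ (2 : Fin 3) -
        algebraMap ℂ (FreeAlgebra ℂ (Fin 3)) t + (2 * c) • ι ℂ (0 : Fin 3)) 0

/-- The rational Cherednik algebra `H_{t,c}` of type `A₁`. -/
abbrev CherednikA1 (t c : ℂ) := RingQuot (CherednikRel t c)

/-- The generator `s` of `H_{t,c}`. -/
noncomputable def CherednikA1.S (t c : ℂ) : CherednikA1 t c :=
  RingQuot.mkAlgHom ℂ (CherednikRel t c) (ι ℂ (0 : Fin 3))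

/-- The generator `x` of `H_{t,c}`. -/
noncomputable def CherednikA1.x (t c : ℂ) : CherednikA1 t c :=
  RingQuot.mkAlgHom ℂ (CherednikRel t c) (ι ℂ (1 : Fin 3))

/-- The generator `ξ` of `H_{t,c}`. -/
noncomputable def CherednikA1.xi (t c : ℂ) : CherednikA1 t c :=
  RingQuot.mkAlgHom ℂ (CherednikRel t c) (ι ℂ (2 : Fin 3))

/-- The symmetrizing idempotent `e = (1+s)/2` of `H_{t,c}`. -/
noncomputable def CherednikA1.e (t c : ℂ) : CherednikA1 t c :=
  (1/2 : ℂ) • (1 + CherednikA1.S t c)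

/-- The presentation of `U(sl₂(ℂ))/⟨C - λ⟩` by generators `e₊ = ι 0`, `h = ι 1`,
`e₋ = ι 2` and relations `[h,e₊] = 2e₊`, `[h,e₋] = -2e₋`, `[e₊,e₋] = h`, together
with `C = e₊e₋ + e₋e₊ + (1/2)h² = λ`. -/
inductive Sl2CasimirRel (lam : ℂ) : FreeAlgebra ℂ (Fin 3) → FreeAlgebra ℂ (Fin 3) → Prop
  | h_ep : Sl2CasimirRel lam
      (ι ℂ (1 : Fin 3) * ι ℂ (0 : Fin 3) - ι ℂ (0 : Fin 3) * ι ℂ (1 : Fin 3) -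
        (2 : ℂ) • ι ℂ (0 : Fin 3)) 0
  | h_em : Sl2CasimirRel lam
      (ι ℂ (1 : Fin 3) * ι ℂ (2 : Fin 3) - ι ℂ (2 : Fin 3) * ι ℂ (1 : Fin 3) +
        (2 : ℂ) • ι ℂ (2 : Fin 3)) 0
  | ep_em : Sl2CasimirRel lam
      (ι ℂ (0 : Fin 3) * ι ℂ (2 : Fin 3) - ι ℂ (2 : Fin 3) * ι ℂ (0 : Fin 3) -
        ι ℂ (1 : Fin 3)) 0
  | casimir : Sl2CasimirRel lam
      (ι ℂ (0 : Fin 3) * ι ℂ (2 : Fin 3) + ι ℂ (2 : Fin 3) * ι ℂ (0 : Fin 3) +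
        (1/2 : ℂ) • (ι ℂ (1 : Fin 3) * ι ℂ (1 : Fin 3)) -
        algebraMap ℂ (FreeAlgebra ℂ (Fin 3)) lam) 0

/-- The central quotient `U(sl₂(ℂ))/⟨C - λ⟩`. -/
abbrev Sl2CasimirQuot (lam : ℂ) := RingQuot (Sl2CasimirRel lam)

section Generation

variable {k A X : Type*} [CommSemiring k] [Semiring A] [Algebra k A]

theorem mul_mem_of_adjoin_eq_top {S : Set A} (hS : Algebra.adjoin k S = ⊤) {M : Submodule k A}
    (hM : ∀ u ∈ S, ∀ w ∈ M, u * w ∈ M) (a : A) {w : A} (hw : w ∈ M) : a * w ∈ M := by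
  have ha : a ∈ Algebra.adjoin k S := hS ▸ Algebra.mem_top
  induction ha using Algebra.adjoin_induction generalizing w with
  | mem u hu => exact hM u hu w hw
  | algebraMap r => rw [← Algebra.smul_def]; exact M.smul_mem r hw
  | add a b _ _ iha ihb => rw [add_mul]; exact M.add_mem (iha hw) (ihb hw)
  | mul a b _ _ iha ihb => rw [mul_assoc]; exact iha (ihb hw)

theorem adjoin_range_mkAlgHom_ι (r : FreeAlgebra k X → FreeAlgebra k X → Prop) :
    Algebra.adjoin k (Set.range fun i => RingQuot.mkAlgHom k r (FreeAlgebra.ι k i)) = ⊤ := by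
  rw [Set.range_comp' (RingQuot.mkAlgHom k r), ← AlgHom.map_adjoin, FreeAlgebra.adjoin_range_ι,
    Algebra.map_top, AlgHom.range_eq_top]
  exact RingQuot.mkAlgHom_surjective k r

end Generation

section Corner

variable {k A A' : Type*} [CommSemiring k] [Semiring A] [Algebra k A] [Semiring A'] [Algebra k A']
  {e : A}

/-- The corner `eAe` of a `k`-algebra is a `k`-module under the scalar multiplication of `A`. -/
instance cornerModule (he : IsIdempotentElem e) : Module k he.Corner :=
  letI : SMul k he.Corner := ⟨fun r z => ⟨r • z.1, by
    obtain ⟨a, ha⟩ := z.2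
    exact ⟨r • a, by simp only [← ha, mul_smul_comm, smul_mul_assoc]⟩⟩⟩
  Function.Injective.module k
    { toFun := fun z : he.Corner => z.1, map_zero' := rfl, map_add' := fun _ _ => rfl }
    Subtype.val_injective fun _ _ => rfl

/-- The corner `eAe` of a `k`-algebra, as a `k`-algebra with unit `e`. -/
noncomputable instance cornerAlgebra (he : IsIdempotentElem e) : Algebra k he.Corner :=
  Algebra.ofModule (fun r y z => Subtype.ext (smul_mul_assoc r y.1 z.1))
    (fun r y z => Subtype.ext (mul_smul_comm r y.1 z.1))

variable (k) in
/-- The inclusion `eAe → A`, which is multiplicative but sends `1` to `e`. -/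
def cornerSubtype (he : IsIdempotentElem e) :
    he.Corner →ₙₐ[k] A where
  toFun z := z.1
  map_smul' _ _ := rfl
  map_zero' := rfl
  map_add' _ _ := rfl
  map_mul' _ _ := rfl

variable (k) in
/-- The compression `a ↦ eae` of `A` onto its corner `eAe`. -/
def cornerMk (he : IsIdempotentElem e) :
    A →ₗ[k] he.Corner where
  toFun a := ⟨e * a * e, a, rfl⟩
  map_add' a b := Subtype.ext <| (congrArg (· * e) (mul_add e a b)).trans (add_mul _ _ e)
  map_smul' r a := Subtype.ext <| (congrArg (· * e) (mul_smul_comm r e a)).trans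
    (smul_mul_assoc r _ e)

theorem cornerSubtype_injective (he : IsIdempotentElem e) :
    Function.Injective (cornerSubtype k he) :=
  Subtype.val_injective

theorem cornerSubtype_one (he : IsIdempotentElem e) : cornerSubtype k he 1 = e :=
  rfl

theorem cornerSubtype_cornerMk (he : IsIdempotentElem e) (a : A) :
    cornerSubtype k he (cornerMk k he a) = e * a * e :=
  rfl

theorem mul_cornerSubtype (he : IsIdempotentElem e) (z : he.Corner) :
    e * cornerSubtype k he z = cornerSubtype k he z :=
  ((Subsemigroup.mem_corner_iff he).mp z.2).1

theorem cornerSubtype_mul (he : IsIdempotentElem e) (z : he.Corner) :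
    cornerSubtype k he z * e = cornerSubtype k he z :=
  ((Subsemigroup.mem_corner_iff he).mp z.2).2

theorem range_cornerSubtype (he : IsIdempotentElem e) :
    Set.range (cornerSubtype k he) = {z | e * z * e = z} := by
  ext z
  constructor
  · rintro ⟨z, rfl⟩
    exact (congrArg (· * e) (mul_cornerSubtype he z)).trans (cornerSubtype_mul he z)
  · exact fun hz => ⟨cornerMk k he z, hz⟩

theorem cornerMk_one (he : IsIdempotentElem e) : cornerMk k he 1 = 1 :=
  cornerSubtype_injective (k := k) he <| by
    rw [cornerSubtype_cornerMk, cornerSubtype_one, mul_one, he.eq]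

theorem cornerSubtype_cornerMk_of_commute (he : IsIdempotentElem e) {a : A} (ha : Commute e a) :
    cornerSubtype k he (cornerMk k he a) = a * e := by
  rw [cornerSubtype_cornerMk, ha.eq, mul_assoc, he.eq]

theorem cornerMk_mul (he : IsIdempotentElem e) {a : A} (ha : Commute e a) (b : A) :
    cornerMk k he (a * b) = cornerMk k he a * cornerMk k he b :=
  cornerSubtype_injective (k := k) he <| by
    rw [map_mul (cornerSubtype k he), cornerSubtype_cornerMk_of_commute he ha,
      cornerSubtype_cornerMk, cornerSubtype_cornerMk, ← mul_assoc, ha.eq]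
    simp only [mul_assoc]
    rw [← mul_assoc e e, he.eq]

theorem cornerMk_lie {k A : Type*} [CommSemiring k] [Ring A] [Algebra k A] {e : A}
    (he : IsIdempotentElem e) {a b : A} (ha : Commute e a) (hb : Commute e b) :
    cornerMk k he ⁅a, b⁆ = ⁅cornerMk k he a, cornerMk k he b⁆ := by
  rw [Ring.lie_def, Ring.lie_def, ← cornerMk_mul he ha, ← cornerMk_mul he hb, map_sub]

theorem cornerSubtype_cornerMk_mul (he : IsIdempotentElem e) {a : A} (ha : Commute e a)
    (z : he.Corner) :
    cornerSubtype k he (cornerMk k he a * z) = a * cornerSubtype k he z := by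
  rw [map_mul, cornerSubtype_cornerMk_of_commute he ha, mul_assoc, mul_cornerSubtype]

/-- The multiplicative map `eAe → A'` obtained by restricting `A → A'`. It sends `1` to the image
of `e`. -/
def cornerRep (he : IsIdempotentElem e) (ρ : A →ₐ[k] A') : he.Corner →ₙₐ[k] A' :=
  (ρ : A →ₙₐ[k] A').comp (cornerSubtype k he)

theorem cornerRep_cornerMk_of_commute (he : IsIdempotentElem e) (ρ : A →ₐ[k] A') {a : A}
    (ha : Commute e a) : cornerRep he ρ (cornerMk k he a) = ρ a * ρ e :=
  (congrArg ρ (cornerSubtype_cornerMk_of_commute (k := k) he ha)).trans (map_mul ρ a e)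

end Corner

section Weights

open Polynomial

/-- The monomial of weight `2n` in an `sl₂`-triple `(p, h, q)`: `pⁿ` for `n ≥ 0` and `q⁻ⁿ` for
`n < 0`. -/
def weightMonomial {B : Type*} [Monoid B] (p q : B) : ℤ → B
  | Int.ofNat n => p ^ n
  | Int.negSucc n => q ^ (n + 1)

theorem weightMonomial_natCast {B : Type*} [Monoid B] (p q : B) (n : ℕ) :
    weightMonomial p q n = p ^ n :=
  rfl

theorem weightMonomial_neg_natCast {B : Type*} [Monoid B] (p q : B) :
    ∀ n : ℕ, weightMonomial p q (-n) = q ^ n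
  | 0 => (pow_zero p).trans (pow_zero q).symm
  | _ + 1 => rfl

variable {k B B' : Type*} [CommRing k] [Ring B] [Algebra k B] [Ring B'] [Algebra k B']

/-- The map `(fₙ)ₙ ↦ ∑ₙ wₙ fₙ(h)`, where `wₙ` is the monomial of weight `2n`. -/
noncomputable def weightSum (p h q : B) : (ℤ →₀ k[X]) →ₗ[k] B :=
  Finsupp.lsum k fun n => LinearMap.mulLeft k (weightMonomial p q n) ∘ₗ (aeval h).toLinearMap

theorem weightSum_single (p h q : B) (n : ℤ) (f : k[X]) :
    weightSum p h q (Finsupp.single n f) = weightMonomial p q n * aeval h f := by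
  simp [weightSum]

theorem map_weightMonomial {M N F : Type*} [Monoid M] [Monoid N] [FunLike F M N]
    [MonoidHomClass F M N] (ψ : F) (p q : M) (n : ℤ) :
    ψ (weightMonomial p q n) = weightMonomial (ψ p) (ψ q) n := by
  cases n <;> exact map_pow ψ _ _

theorem comp_weightSum (ψ : B →ₐ[k] B') (p h q : B) :
    ψ.toLinearMap ∘ₗ weightSum p h q = weightSum (ψ p) (ψ h) (ψ q) := by
  refine Finsupp.lhom_ext fun n f => ?_
  rw [LinearMap.comp_apply, weightSum_single, weightSum_single, AlgHom.toLinearMap_apply, map_mul,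
    map_weightMonomial, aeval_algHom_apply]

theorem lie_pow_of_lie_eq_smul {h w : B} {r : k} (hw : ⁅h, w⁆ = r • w) (n : ℕ) :
    ⁅h, w ^ n⁆ = (n * r) • w ^ n := by
  induction n with
  | zero => simp [Ring.lie_def]
  | succ n ih =>
    have leibniz : ⁅h, w ^ n * w⁆ = ⁅h, w ^ n⁆ * w + w ^ n * ⁅h, w⁆ := by
      simp only [Ring.lie_def]
      noncomm_ring
    rw [pow_succ, leibniz, ih, hw, smul_mul_assoc, mul_smul_comm, ← add_smul]
    push_cast
    ring_nf

theorem aeval_mul_of_lie_eq_smul {h w : B} {r : k} (hw : ⁅h, w⁆ = r • w) (f : k[X]) :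
    aeval h f * w = w * aeval h (f.comp (X + C r)) := by
  have h_mul : h * w = w * aeval h (X + C r) := by
    rw [map_add, aeval_X, aeval_C, mul_add, ← Algebra.commutes, ← Algebra.smul_def, ← hw,
      Ring.lie_def, add_sub_cancel]
  induction f using Polynomial.induction_on with
  | C a => simp only [aeval_C, C_comp, Algebra.commutes]
  | add f g hf hg => rw [map_add, add_mul, hf, hg, add_comp, map_add, mul_add]
  | monomial n a ih =>
    rw [pow_succ, ← mul_assoc, map_mul, aeval_X, mul_assoc, h_mul, ← mul_assoc, ih, mul_assoc,
      ← map_mul, mul_comp (C a * X ^ n) X, X_comp]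

end Weights

section CasimirTriple

open Polynomial

variable {k B : Type*} [Field k] [Ring B] [Algebra k B]

/-- Elements of an algebra satisfying the relations of `e₊`, `h`, `e₋` in `U(sl₂)/⟨C - λ⟩`. Unlike
for `IsSl2Triple`, the element `h` may vanish. -/
structure IsCasimirTriple (lam : k) (p h q : B) : Prop where
  lie_h_p : ⁅h, p⁆ = (2 : k) • p
  lie_h_q : ⁅h, q⁆ = -((2 : k) • q)
  lie_p_q : ⁅p, q⁆ = h
  casimir : p * q + q * p + (1 / 2 : k) • (h * h) = lam • 1

namespace IsCasimirTriple

variable {lam : k} {p h q : B}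

theorem lie_h_q_smul (T : IsCasimirTriple lam p h q) : ⁅h, q⁆ = (-2 : k) • q := by
  rw [T.lie_h_q, neg_smul]

theorem exists_h_mul_weightMonomial (T : IsCasimirTriple lam p h q) (n : ℤ) :
    ∃ f : k[X], h * weightMonomial p q n = weightMonomial p q n * aeval h f := by
  obtain ⟨n, rfl | rfl⟩ := n.eq_nat_or_neg
  · have := aeval_mul_of_lie_eq_smul (lie_pow_of_lie_eq_smul T.lie_h_p n) X
    rw [aeval_X] at this
    exact ⟨_, by rwa [weightMonomial_natCast]⟩
  · have := aeval_mul_of_lie_eq_smul (lie_pow_of_lie_eq_smul T.lie_h_q_smul n) X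
    rw [aeval_X] at this
    exact ⟨_, by rwa [weightMonomial_neg_natCast]⟩

variable [NeZero (2 : k)]

theorem p_mul_q (T : IsCasimirTriple lam p h q) :
    p * q = aeval h (C (1 / 2) * (C lam - C (1 / 2) * X ^ 2 + X)) := by
  have hlie := T.lie_p_q
  rw [Ring.lie_def] at hlie
  calc p * q = (1 / 2 : k) • ((p * q + q * p + (1 / 2 : k) • (h * h)) -
        (1 / 2 : k) • (h * h) + (p * q - q * p)) := by match_scalars <;> field_simp <;> ring
    _ = _ := by
      rw [T.casimir, hlie]
      simp only [map_mul, map_add, map_sub, aeval_C, aeval_X, pow_two,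
        Algebra.algebraMap_eq_smul_one, smul_mul_assoc, one_mul]

theorem q_mul_p (T : IsCasimirTriple lam p h q) :
    q * p = aeval h (C (1 / 2) * (C lam - C (1 / 2) * X ^ 2 - X)) := by
  have hlie := T.lie_p_q
  rw [Ring.lie_def] at hlie
  calc q * p = (1 / 2 : k) • ((p * q + q * p + (1 / 2 : k) • (h * h)) -
        (1 / 2 : k) • (h * h) - (p * q - q * p)) := by match_scalars <;> field_simp <;> ring
    _ = _ := by
      rw [T.casimir, hlie]
      simp only [map_mul, map_sub, aeval_C, aeval_X, pow_two,
        Algebra.algebraMap_eq_smul_one, smul_mul_assoc, one_mul]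

theorem exists_p_mul_weightMonomial (T : IsCasimirTriple lam p h q) (n : ℤ) :
    ∃ f : k[X], p * weightMonomial p q n = weightMonomial p q (n + 1) * aeval h f := by
  obtain ⟨n, rfl | rfl⟩ := n.eq_nat_or_neg
  · refine ⟨1, ?_⟩
    rw [map_one, mul_one, ← Nat.cast_succ, weightMonomial_natCast, weightMonomial_natCast,
      pow_succ']
  · cases n with
    | zero => exact ⟨1, by simp [weightMonomial]⟩
    | succ n =>
      refine ⟨(C (1 / 2) * (C lam - C (1 / 2) * X ^ 2 + X)).comp (X + C ((n : k) * -2)), ?_⟩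
      rw [weightMonomial_neg_natCast, Nat.cast_succ, neg_add_rev, neg_add_cancel_comm,
        weightMonomial_neg_natCast, pow_succ', ← mul_assoc, T.p_mul_q,
        aeval_mul_of_lie_eq_smul (lie_pow_of_lie_eq_smul T.lie_h_q_smul n)]

theorem exists_q_mul_weightMonomial (T : IsCasimirTriple lam p h q) (n : ℤ) :
    ∃ f : k[X], q * weightMonomial p q n = weightMonomial p q (n - 1) * aeval h f := by
  obtain ⟨n, rfl | rfl⟩ := n.eq_nat_or_neg
  · cases n with
    | zero =>
      exact ⟨1, by simpa [weightMonomial] using (weightMonomial_neg_natCast p q 1).symm⟩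
    | succ n =>
      refine ⟨(C (1 / 2) * (C lam - C (1 / 2) * X ^ 2 - X)).comp (X + C ((n : k) * 2)), ?_⟩
      rw [weightMonomial_natCast, Nat.cast_succ, add_sub_cancel_right, weightMonomial_natCast,
        pow_succ', ← mul_assoc, T.q_mul_p,
        aeval_mul_of_lie_eq_smul (lie_pow_of_lie_eq_smul T.lie_h_p n)]
  · refine ⟨1, ?_⟩
    rw [map_one, mul_one, ← neg_add', ← Nat.cast_succ, weightMonomial_neg_natCast,
      weightMonomial_neg_natCast, pow_succ']

theorem mul_mem_range_weightSum (T : IsCasimirTriple lam p h q) {u : B}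
    (hu : u ∈ ({p, h, q} : Set B)) {w : B} (hw : w ∈ LinearMap.range (weightSum (k := k) p h q)) :
    u * w ∈ LinearMap.range (weightSum (k := k) p h q) := by
  obtain ⟨g, rfl⟩ := hw
  induction g using Finsupp.induction_linear with
  | zero => simp only [map_zero, mul_zero, zero_mem]
  | add f g hf hg => rw [map_add, mul_add]; exact add_mem hf hg
  | single n f =>
    obtain ⟨n', f', hn⟩ : ∃ (n' : ℤ) (f' : k[X]),
        u * weightMonomial p q n = weightMonomial p q n' * aeval h f' := by
      rcases hu with rfl | rfl | rfl
      · exact ⟨_, T.exists_p_mul_weightMonomial n⟩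
      · exact ⟨_, T.exists_h_mul_weightMonomial n⟩
      · exact ⟨_, T.exists_q_mul_weightMonomial n⟩
    exact ⟨Finsupp.single n' (f' * f), by
      rw [weightSum_single, weightSum_single, ← mul_assoc, hn, map_mul, mul_assoc]⟩

theorem weightSum_surjective (T : IsCasimirTriple lam p h q)
    (hgen : Algebra.adjoin k {p, h, q} = ⊤) :
    Function.Surjective (weightSum (k := k) p h q) := fun a => by
  have one_mem : (1 : B) ∈ LinearMap.range (weightSum (k := k) p h q) :=
    ⟨Finsupp.single 0 1, by
      rw [weightSum_single, map_one, mul_one]; exact weightMonomial_natCast p q 0 ▸ pow_zero p⟩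
  have a_mem := mul_mem_of_adjoin_eq_top hgen
    (fun _ hu _ hw => T.mul_mem_range_weightSum hu hw) a one_mem
  rwa [mul_one] at a_mem

end IsCasimirTriple

end CasimirTriple

section CherednikTriple

theorem commute_mul_of_anticommute {R : Type*} [Ring R] {s a b : R} (ha : s * a = -(a * s))
    (hb : s * b = -(b * s)) : Commute s (a * b) := by
  have : SemiconjBy s (a * b) (-a * -b) :=
    SemiconjBy.mul_right (ha.trans (neg_mul a s).symm) (hb.trans (neg_mul b s).symm)
  rwa [neg_mul_neg] at this

variable {k A : Type*} [Field k] [Ring A] [Algebra k A]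

/-- Elements of an algebra satisfying the relations of `s`, `x`, `ξ` in `H_{1,c}`. -/
structure IsCherednikTriple (c : k) (s x ξ : A) : Prop where
  s_mul_s : s * s = 1
  s_mul_x : s * x = -(x * s)
  s_mul_ξ : s * ξ = -(ξ * s)
  lie_ξ_x : ⁅ξ, x⁆ = 1 - (2 * c) • s

variable (k) in
/-- The element `e = (1 + s) / 2`. -/
def symmetrizer (s : A) : A := (1 / 2 : k) • (1 + s)

variable (k) in
/-- The deformed Euler element `(xξ + ξx) / 2`, which plays the role of `h`. -/
def eulerElement (x ξ : A) : A := (1 / 2 : k) • (x * ξ + ξ * x)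

theorem symmetrizer_mul (s a : A) : symmetrizer k s * a = (1 / 2 : k) • (a + s * a) := by
  rw [symmetrizer, smul_mul_assoc, add_mul, one_mul]

theorem commute_symmetrizer {s a : A} (h : Commute s a) : Commute (symmetrizer k s) a :=
  ((Commute.one_left a).add_left h).smul_left _

namespace IsCherednikTriple

variable {c : k} {s x ξ : A}

theorem commute_s_x_sq (T : IsCherednikTriple c s x ξ) : Commute s (x ^ 2) :=
  pow_two x ▸ commute_mul_of_anticommute T.s_mul_x T.s_mul_x

theorem commute_s_ξ_sq (T : IsCherednikTriple c s x ξ) : Commute s (ξ ^ 2) :=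
  pow_two ξ ▸ commute_mul_of_anticommute T.s_mul_ξ T.s_mul_ξ

theorem commute_s_euler (T : IsCherednikTriple c s x ξ) : Commute s (eulerElement k x ξ) :=
  ((commute_mul_of_anticommute T.s_mul_x T.s_mul_ξ).add_right
    (commute_mul_of_anticommute T.s_mul_ξ T.s_mul_x)).smul_right _

theorem s_mul_symmetrizer (T : IsCherednikTriple c s x ξ) :
    s * symmetrizer k s = symmetrizer k s := by
  rw [symmetrizer, mul_smul_comm, mul_add, mul_one, T.s_mul_s, add_comm]

variable [NeZero (2 : k)]

theorem x_mul_ξ (T : IsCherednikTriple c s x ξ) :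
    x * ξ = eulerElement k x ξ - (1 / 2 : k) • 1 + c • s := by
  have h : ξ * x = x * ξ + (1 - (2 * c) • s) := by rw [← T.lie_ξ_x, Ring.lie_def]; abel
  rw [eulerElement, h]
  match_scalars <;> field_simp <;> ring

theorem ξ_mul_x (T : IsCherednikTriple c s x ξ) :
    ξ * x = eulerElement k x ξ + (1 / 2 : k) • 1 - c • s := by
  have h : ξ * x = x * ξ + (1 - (2 * c) • s) := by rw [← T.lie_ξ_x, Ring.lie_def]; abel
  rw [h, T.x_mul_ξ]
  match_scalars <;> field_simp <;> ring

theorem lie_euler_x (T : IsCherednikTriple c s x ξ) : ⁅eulerElement k x ξ, x⁆ = (1 : k) • x := by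
  have hx : eulerElement k x ξ = x * ξ + (1 / 2 : k) • 1 - c • s := by rw [T.x_mul_ξ]; abel
  have xh : eulerElement k x ξ = ξ * x - (1 / 2 : k) • 1 + c • s := by rw [T.ξ_mul_x]; abel
  rw [Ring.lie_def]
  nth_rw 1 [hx]
  rw [xh]
  simp only [add_mul, sub_mul, mul_add, mul_sub, smul_mul_assoc, mul_smul_comm, one_mul, mul_one,
    T.s_mul_x, mul_assoc]
  match_scalars <;> field_simp <;> ring

theorem lie_euler_ξ (T : IsCherednikTriple c s x ξ) : ⁅eulerElement k x ξ, ξ⁆ = (-1 : k) • ξ := by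
  have ξh : eulerElement k x ξ = x * ξ + (1 / 2 : k) • 1 - c • s := by rw [T.x_mul_ξ]; abel
  have hξ : eulerElement k x ξ = ξ * x - (1 / 2 : k) • 1 + c • s := by rw [T.ξ_mul_x]; abel
  rw [Ring.lie_def]
  nth_rw 1 [hξ]
  rw [ξh]
  simp only [add_mul, sub_mul, mul_add, mul_sub, smul_mul_assoc, mul_smul_comm, one_mul, mul_one,
    T.s_mul_ξ, mul_assoc]
  match_scalars <;> field_simp <;> ring

theorem x_sq_mul_ξ_sq (T : IsCherednikTriple c s x ξ) :
    x ^ 2 * ξ ^ 2 = eulerElement k x ξ * eulerElement k x ξ - (2 : k) • eulerElement k x ξ -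
      ((c - 1 / 2) * (c + 3 / 2)) • 1 + c • (1 - s) := by
  have x_mul_x_mul_ξ : x * (x * ξ) = (eulerElement k x ξ - (3 / 2 : k) • 1 - c • s) * x := by
    have hx := T.lie_euler_x
    rw [Ring.lie_def, sub_eq_iff_eq_add', one_smul] at hx
    rw [T.x_mul_ξ]
    simp only [mul_add, mul_sub, sub_mul, mul_smul_comm, smul_mul_assoc, mul_one, one_mul, hx,
      T.s_mul_x]
    match_scalars <;> field_simp
    ring
  calc x ^ 2 * ξ ^ 2 = x * (x * ξ) * ξ := by noncomm_ring
    _ = (eulerElement k x ξ - (3 / 2 : k) • 1 - c • s) *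
        (eulerElement k x ξ - (1 / 2 : k) • 1 + c • s) := by
      rw [x_mul_x_mul_ξ, mul_assoc, T.x_mul_ξ]
    _ = _ := by
      simp only [mul_add, mul_sub, sub_mul, mul_smul_comm, smul_mul_assoc, mul_one, one_mul,
        T.commute_s_euler.eq, T.s_mul_s]
      match_scalars <;> field_simp <;> ring

theorem ξ_sq_mul_x_sq (T : IsCherednikTriple c s x ξ) :
    ξ ^ 2 * x ^ 2 = eulerElement k x ξ * eulerElement k x ξ + (2 : k) • eulerElement k x ξ -
      ((c - 1 / 2) * (c + 3 / 2)) • 1 + c • (1 - s) := by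
  have ξ_mul_ξ_mul_x : ξ * (ξ * x) = (eulerElement k x ξ + (3 / 2 : k) • 1 + c • s) * ξ := by
    have hξ := T.lie_euler_ξ
    rw [Ring.lie_def, sub_eq_iff_eq_add', neg_one_smul] at hξ
    rw [T.ξ_mul_x]
    simp only [mul_add, mul_sub, add_mul, mul_smul_comm, smul_mul_assoc, mul_one, one_mul, hξ,
      T.s_mul_ξ]
    match_scalars <;> field_simp
    ring
  calc ξ ^ 2 * x ^ 2 = ξ * (ξ * x) * x := by noncomm_ring
    _ = (eulerElement k x ξ + (3 / 2 : k) • 1 + c • s) *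
        (eulerElement k x ξ + (1 / 2 : k) • 1 - c • s) := by
      rw [ξ_mul_ξ_mul_x, mul_assoc, T.ξ_mul_x]
    _ = _ := by
      simp only [mul_add, mul_sub, add_mul, mul_smul_comm, smul_mul_assoc, mul_one, one_mul,
        T.commute_s_euler.eq, T.s_mul_s]
      match_scalars <;> field_simp <;> ring

theorem lie_euler_x_sq (T : IsCherednikTriple c s x ξ) :
    ⁅eulerElement k x ξ, x ^ 2⁆ = (2 : k) • x ^ 2 := by
  simpa using lie_pow_of_lie_eq_smul T.lie_euler_x 2

theorem lie_euler_ξ_sq (T : IsCherednikTriple c s x ξ) :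
    ⁅eulerElement k x ξ, ξ ^ 2⁆ = -((2 : k) • ξ ^ 2) := by
  simpa using lie_pow_of_lie_eq_smul T.lie_euler_ξ 2

theorem isIdempotentElem (T : IsCherednikTriple c s x ξ) : IsIdempotentElem (symmetrizer k s) := by
  rw [IsIdempotentElem, symmetrizer, smul_mul_smul_comm, add_mul, mul_add, mul_add, T.s_mul_s]
  simp only [one_mul, mul_one]
  match_scalars <;> field_simp <;> ring

theorem s_mul_cornerSubtype (T : IsCherednikTriple c s x ξ) (z : T.isIdempotentElem.Corner) :
    s * cornerSubtype k T.isIdempotentElem z = cornerSubtype k T.isIdempotentElem z := by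
  rw [← mul_cornerSubtype, ← mul_assoc, T.s_mul_symmetrizer]

/-- The image of `e₊` in the corner. -/
def ePlus (T : IsCherednikTriple c s x ξ) : T.isIdempotentElem.Corner :=
  cornerMk k T.isIdempotentElem ((1 / 2 : k) • x ^ 2)

/-- The image of `h` in the corner. -/
def cartan (T : IsCherednikTriple c s x ξ) : T.isIdempotentElem.Corner :=
  cornerMk k T.isIdempotentElem (eulerElement k x ξ)

/-- The image of `e₋` in the corner. -/
def eMinus (T : IsCherednikTriple c s x ξ) : T.isIdempotentElem.Corner :=
  cornerMk k T.isIdempotentElem ((-(1 / 2) : k) • ξ ^ 2)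

theorem cornerSubtype_ePlus_mul (T : IsCherednikTriple c s x ξ)
    (z : T.isIdempotentElem.Corner) :
    cornerSubtype k T.isIdempotentElem (T.ePlus * z) =
      (1 / 2 : k) • (x ^ 2 * cornerSubtype k T.isIdempotentElem z) := by
  rw [ePlus, cornerSubtype_cornerMk_mul _ (commute_symmetrizer (T.commute_s_x_sq.smul_right _)),
    smul_mul_assoc]

theorem cornerSubtype_cartan_mul (T : IsCherednikTriple c s x ξ)
    (z : T.isIdempotentElem.Corner) :
    cornerSubtype k T.isIdempotentElem (T.cartan * z) =
      eulerElement k x ξ * cornerSubtype k T.isIdempotentElem z :=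
  cornerSubtype_cornerMk_mul _ (commute_symmetrizer T.commute_s_euler) z

theorem cornerSubtype_eMinus_mul (T : IsCherednikTriple c s x ξ)
    (z : T.isIdempotentElem.Corner) :
    cornerSubtype k T.isIdempotentElem (T.eMinus * z) =
      (-(1 / 2) : k) • (ξ ^ 2 * cornerSubtype k T.isIdempotentElem z) := by
  rw [eMinus, cornerSubtype_cornerMk_mul _ (commute_symmetrizer (T.commute_s_ξ_sq.smul_right _)),
    smul_mul_assoc]

theorem lie_x_sq_ξ_sq (T : IsCherednikTriple c s x ξ) :
    ⁅x ^ 2, ξ ^ 2⁆ = -((2 * 2 : k) • eulerElement k x ξ) := by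
  rw [Ring.lie_def, T.x_sq_mul_ξ_sq, T.ξ_sq_mul_x_sq]
  module

theorem casimir_eq (T : IsCherednikTriple c s x ξ) :
    ((1 / 2 : k) • x ^ 2) * ((-(1 / 2) : k) • ξ ^ 2) +
        ((-(1 / 2) : k) • ξ ^ 2) * ((1 / 2 : k) • x ^ 2) +
        (1 / 2 : k) • (eulerElement k x ξ * eulerElement k x ξ) =
      (1 / 2 * (c - 1 / 2) * (c + 3 / 2)) • 1 - (c / 2) • (1 - s) := by
  rw [smul_mul_smul_comm, smul_mul_smul_comm, T.x_sq_mul_ξ_sq, T.ξ_sq_mul_x_sq]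
  match_scalars <;> field_simp <;> ring

theorem cornerMk_one_sub_s (T : IsCherednikTriple c s x ξ) :
    cornerMk k T.isIdempotentElem (1 - s) = 0 :=
  cornerSubtype_injective (k := k) T.isIdempotentElem <| by
    rw [cornerSubtype_cornerMk, mul_assoc, sub_mul, one_mul, T.s_mul_symmetrizer, sub_self,
      mul_zero, map_zero]

theorem isCasimirTriple (T : IsCherednikTriple c s x ξ) :
    IsCasimirTriple (1 / 2 * (c - 1 / 2) * (c + 3 / 2)) T.ePlus T.cartan T.eMinus := by
  have hp := commute_symmetrizer (k := k) (T.commute_s_x_sq.smul_right (1 / 2 : k))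
  have hh := commute_symmetrizer (k := k) T.commute_s_euler
  have hq := commute_symmetrizer (k := k) (T.commute_s_ξ_sq.smul_right (-(1 / 2) : k))
  refine ⟨?_, ?_, ?_, ?_⟩
  · rw [cartan, ePlus, ← cornerMk_lie _ hh hp, Ring.lie_def, mul_smul_comm,
      smul_mul_assoc, ← smul_sub, ← Ring.lie_def, T.lie_euler_x_sq, ← map_smul, smul_comm]
  · rw [cartan, eMinus, ← cornerMk_lie _ hh hq, Ring.lie_def, mul_smul_comm,
      smul_mul_assoc, ← smul_sub, ← Ring.lie_def, T.lie_euler_ξ_sq, ← map_smul, ← map_neg,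
      smul_neg, smul_comm]
  · rw [cartan, ePlus, eMinus, ← cornerMk_lie _ hp hq, Ring.lie_def, smul_mul_smul_comm,
      smul_mul_smul_comm, mul_comm (-(1 / 2) : k), ← smul_sub, ← Ring.lie_def, T.lie_x_sq_ξ_sq]
    congr 1
    match_scalars
    field_simp
  · rw [cartan, ePlus, eMinus, ← cornerMk_mul _ hp, ← cornerMk_mul _ hq, ← cornerMk_mul _ hh,
      ← map_smul, ← map_add, ← map_add, T.casimir_eq, map_sub, map_smul, map_smul, cornerMk_one,
      T.cornerMk_one_sub_s, smul_zero, sub_zero]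

/-- The sum `N + xN + ξN`, where `N` is the subalgebra of the corner generated by the `sl₂`-triple.
It turns out to be the whole left ideal `Ae`. -/
noncomputable def sphericalSpan (T : IsCherednikTriple c s x ξ) : Submodule k A :=
  let j : Algebra.adjoin k {T.ePlus, T.cartan, T.eMinus} →ₗ[k] A :=
    (cornerSubtype k T.isIdempotentElem : _ →ₗ[k] A) ∘ₗ (Subalgebra.val _).toLinearMap
  LinearMap.range (j.coprod ((LinearMap.mulLeft k x ∘ₗ j).coprod (LinearMap.mulLeft k ξ ∘ₗ j)))

theorem mem_sphericalSpan (T : IsCherednikTriple c s x ξ) {w : A} :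
    w ∈ T.sphericalSpan ↔ ∃ a ∈ Algebra.adjoin k {T.ePlus, T.cartan, T.eMinus},
      ∃ b ∈ Algebra.adjoin k {T.ePlus, T.cartan, T.eMinus},
      ∃ d ∈ Algebra.adjoin k {T.ePlus, T.cartan, T.eMinus},
        cornerSubtype k T.isIdempotentElem a + (x * cornerSubtype k T.isIdempotentElem b +
          ξ * cornerSubtype k T.isIdempotentElem d) = w :=
  ⟨fun ⟨⟨a, b, d⟩, hw⟩ => ⟨a, a.2, b, b.2, d, d.2, hw⟩,
    fun ⟨a, ha, b, hb, d, hd, hw⟩ => ⟨⟨⟨a, ha⟩, ⟨b, hb⟩, ⟨d, hd⟩⟩, hw⟩⟩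

theorem x_mul_x_mul_cornerSubtype (T : IsCherednikTriple c s x ξ) (z : T.isIdempotentElem.Corner) :
    x * (x * cornerSubtype k T.isIdempotentElem z) =
      cornerSubtype k T.isIdempotentElem ((2 : k) • (T.ePlus * z)) := by
  rw [map_smul, T.cornerSubtype_ePlus_mul, smul_smul, mul_one_div_cancel two_ne_zero, one_smul,
    pow_two, mul_assoc]

theorem x_mul_ξ_mul_cornerSubtype (T : IsCherednikTriple c s x ξ) (z : T.isIdempotentElem.Corner) :
    x * (ξ * cornerSubtype k T.isIdempotentElem z) =
      cornerSubtype k T.isIdempotentElem (T.cartan * z + (c - 1 / 2) • z) := by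
  rw [map_add, map_smul, T.cornerSubtype_cartan_mul, ← mul_assoc, T.x_mul_ξ, add_mul, sub_mul,
    smul_mul_assoc, smul_mul_assoc, one_mul, T.s_mul_cornerSubtype]
  module

theorem ξ_mul_x_mul_cornerSubtype (T : IsCherednikTriple c s x ξ) (z : T.isIdempotentElem.Corner) :
    ξ * (x * cornerSubtype k T.isIdempotentElem z) =
      cornerSubtype k T.isIdempotentElem (T.cartan * z - (c - 1 / 2) • z) := by
  rw [map_sub, map_smul, T.cornerSubtype_cartan_mul, ← mul_assoc, T.ξ_mul_x, sub_mul, add_mul,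
    smul_mul_assoc, smul_mul_assoc, one_mul, T.s_mul_cornerSubtype]
  module

theorem ξ_mul_ξ_mul_cornerSubtype (T : IsCherednikTriple c s x ξ) (z : T.isIdempotentElem.Corner) :
    ξ * (ξ * cornerSubtype k T.isIdempotentElem z) =
      cornerSubtype k T.isIdempotentElem ((-2 : k) • (T.eMinus * z)) := by
  rw [map_smul, T.cornerSubtype_eMinus_mul, smul_smul, neg_mul_neg,
    mul_one_div_cancel two_ne_zero, one_smul, pow_two, mul_assoc]

theorem mul_mem_sphericalSpan (T : IsCherednikTriple c s x ξ) {u : A} (hu : u ∈ ({s, x, ξ} : Set A))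
    {w : A} (hw : w ∈ T.sphericalSpan) : u * w ∈ T.sphericalSpan := by
  let N := Algebra.adjoin k {T.ePlus, T.cartan, T.eMinus}
  have hp : T.ePlus ∈ N := Algebra.subset_adjoin (by simp)
  have hh : T.cartan ∈ N := Algebra.subset_adjoin (by simp)
  have hq : T.eMinus ∈ N := Algebra.subset_adjoin (by simp)
  obtain ⟨a, ha, b, hb, d, hd, rfl⟩ := T.mem_sphericalSpan.mp hw
  refine T.mem_sphericalSpan.mpr ?_
  rcases hu with rfl | rfl | rfl
  · refine ⟨a, ha, -b, N.neg_mem hb, -d, N.neg_mem hd, ?_⟩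
    simp only [mul_add, ← mul_assoc, T.s_mul_x, T.s_mul_ξ, neg_mul, map_neg, mul_neg]
    simp only [mul_assoc, T.s_mul_cornerSubtype]
  · refine ⟨(2 : k) • (T.ePlus * b) + (T.cartan * d + (c - 1 / 2) • d), ?_, a, ha,
      0, N.zero_mem, ?_⟩
    · exact add_mem (N.smul_mem (N.mul_mem hp hb) _)
        (add_mem (N.mul_mem hh hd) (N.smul_mem hd _))
    · rw [mul_add, mul_add, T.x_mul_x_mul_cornerSubtype, T.x_mul_ξ_mul_cornerSubtype, map_add,
        map_zero, mul_zero]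
      abel
  · refine ⟨(T.cartan * b - (c - 1 / 2) • b) + (-2 : k) • (T.eMinus * d), ?_,
      0, N.zero_mem, a, ha, ?_⟩
    · exact add_mem (sub_mem (N.mul_mem hh hb) (N.smul_mem hb _))
        (N.smul_mem (N.mul_mem hq hd) _)
    · rw [mul_add, mul_add, T.ξ_mul_x_mul_cornerSubtype, T.ξ_mul_ξ_mul_cornerSubtype, map_add,
        map_zero, mul_zero]
      abel

theorem symmetrizer_mul_of_anticommute (T : IsCherednikTriple c s x ξ) {a : A}
    (ha : s * a = -(a * s)) (z : T.isIdempotentElem.Corner) :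
    symmetrizer k s * (a * cornerSubtype k T.isIdempotentElem z) = 0 := by
  rw [symmetrizer_mul, ← mul_assoc, ha, neg_mul, mul_assoc,
    T.s_mul_cornerSubtype, add_neg_cancel, smul_zero]

theorem adjoin_sl2_eq_top (T : IsCherednikTriple c s x ξ) (h : Algebra.adjoin k {s, x, ξ} = ⊤) :
    Algebra.adjoin k {T.ePlus, T.cartan, T.eMinus} = ⊤ := by
  refine eq_top_iff.mpr fun z _ => ?_
  have e_mem : symmetrizer k s ∈ T.sphericalSpan :=
    T.mem_sphericalSpan.mpr ⟨1, one_mem _, 0, zero_mem _, 0, zero_mem _, by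
      simp only [cornerSubtype_one, map_zero, mul_zero, add_zero]⟩
  obtain ⟨a, ha, b, -, d, -, hz⟩ := T.mem_sphericalSpan.mp <|
    mul_mem_of_adjoin_eq_top h (fun _ hu _ hw => T.mul_mem_sphericalSpan hu hw)
      (cornerSubtype k T.isIdempotentElem z) e_mem
  suffices a = z from this ▸ ha
  apply cornerSubtype_injective (k := k) T.isIdempotentElem
  rw [← mul_cornerSubtype _ z, ← cornerSubtype_mul _ z, ← hz, mul_add, mul_add,
    mul_cornerSubtype, T.symmetrizer_mul_of_anticommute T.s_mul_x,
    T.symmetrizer_mul_of_anticommute T.s_mul_ξ, add_zero, add_zero]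

end IsCherednikTriple

end CherednikTriple

section LaurentRepresentation

open Polynomial

variable {k : Type*} [Field k]

/-- The coefficient in `ξ x^(X + n) = dunkl c n • x^(X + n - 1)`. -/
noncomputable def dunkl (c : k) (n : ℤ) : k[X] := X + C (n - c * (1 - (-1) ^ n))

theorem dunkl_ne_zero (c : k) (n : ℤ) : dunkl c n ≠ 0 :=
  X_add_C_ne_zero _

theorem neg_one_zpow_add_one (n : ℤ) : (-1 : k) ^ (n + 1) = -(-1) ^ n := by
  rw [zpow_add_one₀ (neg_ne_zero.mpr one_ne_zero), mul_neg_one]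

theorem neg_one_zpow_sub_one (n : ℤ) : (-1 : k) ^ (n - 1) = -(-1) ^ n := by
  rw [eq_neg_iff_add_eq_zero, ← neg_eq_iff_add_eq_zero, ← neg_one_zpow_add_one, sub_add_cancel]

theorem dunkl_add_one (c : k) (n : ℤ) :
    dunkl c (n + 1) = dunkl c n + C (1 - 2 * c * (-1) ^ n) := by
  rw [dunkl, dunkl, neg_one_zpow_add_one, add_assoc, ← C_add]
  push_cast
  ring_nf

/-- The reflection `s` on the span over `k[X]` of the formal powers `x^(X + n)`, `n ∈ ℤ`, where
`Finsupp.single n g` stands for `g x^(X + n)`. It acts on the span as if `X` were even. -/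
noncomputable def laurentS : Module.End k (ℤ →₀ k[X]) :=
  Finsupp.lsum k fun n => Finsupp.lsingle n ∘ₗ ((-1 : k) ^ n • LinearMap.id)

/-- Multiplication by `x` on the span of the formal powers `x^(X + n)`. -/
noncomputable def laurentX : Module.End k (ℤ →₀ k[X]) :=
  Finsupp.lsum k fun n => Finsupp.lsingle (n + 1)

/-- The Dunkl operator `ξ` on the span of the formal powers `x^(X + n)`. -/
noncomputable def laurentDunkl (c : k) : Module.End k (ℤ →₀ k[X]) :=
  Finsupp.lsum k fun n => Finsupp.lsingle (n - 1) ∘ₗ LinearMap.mulLeft k (dunkl c n)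

theorem laurentS_single (n : ℤ) (g : k[X]) :
    laurentS (k := k) (Finsupp.single n g) = Finsupp.single n ((-1 : k) ^ n • g) := by
  simp [laurentS]

theorem laurentX_single (n : ℤ) (g : k[X]) :
    laurentX (k := k) (Finsupp.single n g) = Finsupp.single (n + 1) g := by
  simp [laurentX]

theorem laurentDunkl_single (c : k) (n : ℤ) (g : k[X]) :
    laurentDunkl c (Finsupp.single n g) = Finsupp.single (n - 1) (dunkl c n * g) := by
  simp [laurentDunkl]

theorem isCherednikTriple_laurent (c : k) :
    IsCherednikTriple c (laurentS (k := k)) laurentX (laurentDunkl c) where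
  s_mul_s := by
    refine Finsupp.lhom_ext fun n g => ?_
    rw [Module.End.mul_apply, laurentS_single, laurentS_single, smul_smul, ← mul_zpow,
      neg_one_mul, neg_neg, one_zpow, one_smul, Module.End.one_apply]
  s_mul_x := by
    refine Finsupp.lhom_ext fun n g => ?_
    simp only [Module.End.mul_apply, laurentS_single, laurentX_single, neg_one_zpow_add_one,
      LinearMap.neg_apply, neg_smul, Finsupp.single_neg]
  s_mul_ξ := by
    refine Finsupp.lhom_ext fun n g => ?_
    simp only [Module.End.mul_apply, laurentS_single, laurentDunkl_single, neg_one_zpow_sub_one,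
      LinearMap.neg_apply, neg_smul, Finsupp.single_neg, mul_smul_comm]
  lie_ξ_x := by
    refine Finsupp.lhom_ext fun n g => ?_
    simp only [Ring.lie_def, Module.End.mul_apply, laurentS_single, laurentX_single,
      laurentDunkl_single, LinearMap.sub_apply, LinearMap.smul_apply, Module.End.one_apply,
      add_sub_cancel_right, sub_add_cancel, dunkl_add_one, Finsupp.smul_single,
      ← Finsupp.single_sub, smul_smul]
    rw [add_mul, add_sub_cancel_left, C_mul', sub_smul, one_smul]

/-- The representation `ρ` lets `s`, `x`, `ξ` act on the formal powers `x^(X + n)` as the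
reflection, multiplication by `x` and the Dunkl operator. -/
structure IsLaurentRep {A : Type*} [Ring A] [Algebra k A] (c : k)
    (ρ : A →ₐ[k] Module.End k (ℤ →₀ k[X])) (s x ξ : A) : Prop where
  map_s : ρ s = laurentS
  map_x : ρ x = laurentX
  map_ξ : ρ ξ = laurentDunkl c

namespace IsLaurentRep

variable {A : Type*} [Ring A] [Algebra k A] {c : k} {s x ξ : A}
  {ρ : A →ₐ[k] Module.End k (ℤ →₀ k[X])}

theorem euler_single (L : IsLaurentRep c ρ s x ξ) (n : ℤ) (g : k[X]) :
    ρ (eulerElement k x ξ) (Finsupp.single n g) =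
      Finsupp.single n (C (1 / 2) * (dunkl c n + dunkl c (n + 1)) * g) := by
  rw [eulerElement, map_smul, map_add, map_mul, map_mul, L.map_x, L.map_ξ, LinearMap.smul_apply,
    LinearMap.add_apply, Module.End.mul_apply, Module.End.mul_apply, laurentDunkl_single,
    laurentX_single, laurentX_single, laurentDunkl_single, sub_add_cancel, add_sub_cancel_right,
    ← Finsupp.single_add, Finsupp.smul_single, ← add_mul, ← C_mul', mul_assoc]

variable [NeZero (2 : k)]

theorem symmetrizer_single (L : IsLaurentRep c ρ s x ξ) (n : ℤ) (g : k[X]) :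
    ρ (symmetrizer k s) (Finsupp.single (2 * n) g) = Finsupp.single (2 * n) g := by
  rw [symmetrizer, map_smul, map_add, map_one, L.map_s, LinearMap.smul_apply, LinearMap.add_apply,
    Module.End.one_apply, laurentS_single, (even_two_mul n).neg_one_zpow, one_smul,
    ← two_smul k, smul_smul, one_div_mul_cancel two_ne_zero, one_smul]

theorem cornerMk_single (L : IsLaurentRep c ρ s x ξ) (T : IsCherednikTriple c s x ξ) {a : A}
    (ha : Commute s a) (n : ℤ) (g : k[X]) :
    cornerRep T.isIdempotentElem ρ (cornerMk k T.isIdempotentElem a) (Finsupp.single (2 * n) g) =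
      ρ a (Finsupp.single (2 * n) g) := by
  rw [cornerRep_cornerMk_of_commute _ _ (commute_symmetrizer ha), Module.End.mul_apply,
    L.symmetrizer_single]

theorem one_single (L : IsLaurentRep c ρ s x ξ) (T : IsCherednikTriple c s x ξ) (n : ℤ) (g : k[X]) :
    cornerRep T.isIdempotentElem ρ 1 (Finsupp.single (2 * n) g) = Finsupp.single (2 * n) g :=
  L.symmetrizer_single n g

theorem ePlus_single (L : IsLaurentRep c ρ s x ξ) (T : IsCherednikTriple c s x ξ)
    (n : ℤ) (g : k[X]) :
    cornerRep T.isIdempotentElem ρ T.ePlus (Finsupp.single (2 * n) g) =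
      Finsupp.single (2 * (n + 1)) (C (1 / 2) * g) := by
  have index : 2 * n + 1 + 1 = 2 * (n + 1) := by ring
  rw [IsCherednikTriple.ePlus, L.cornerMk_single T (T.commute_s_x_sq.smul_right _), map_smul,
    map_pow, L.map_x, LinearMap.smul_apply, pow_two, Module.End.mul_apply, laurentX_single,
    laurentX_single, Finsupp.smul_single, C_mul', index]

theorem eMinus_single (L : IsLaurentRep c ρ s x ξ) (T : IsCherednikTriple c s x ξ)
    (n : ℤ) (g : k[X]) :
    cornerRep T.isIdempotentElem ρ T.eMinus (Finsupp.single (2 * n) g) =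
      Finsupp.single (2 * (n - 1))
        (C (-(1 / 2)) * (dunkl c (2 * n - 1) * dunkl c (2 * n)) * g) := by
  have index : 2 * n - 1 - 1 = 2 * (n - 1) := by ring
  rw [IsCherednikTriple.eMinus, L.cornerMk_single T (T.commute_s_ξ_sq.smul_right _), map_smul,
    map_pow, L.map_ξ, LinearMap.smul_apply, pow_two, Module.End.mul_apply, laurentDunkl_single,
    laurentDunkl_single, Finsupp.smul_single, ← C_mul', index, mul_assoc, mul_assoc]

theorem cartan_single (L : IsLaurentRep c ρ s x ξ) (T : IsCherednikTriple c s x ξ) (g : k[X]) :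
    cornerRep T.isIdempotentElem ρ T.cartan (Finsupp.single 0 g) =
      Finsupp.single 0 ((X + C (1 / 2 - c)) * g) := by
  have dunkl_zero : dunkl c 0 = X := by simp [dunkl]
  have half_mul_sum : C (1 / 2) * (dunkl c 0 + dunkl c (0 + 1)) = X + C (1 / 2 - c) := by
    have half_add_half : C (1 / 2 : k) + C (1 / 2) = 1 := by
      rw [← C_add, ← two_mul, mul_one_div_cancel two_ne_zero, C_1]
    rw [dunkl_add_one, dunkl_zero, zpow_zero]
    simp only [C_sub, C_mul, C_1, C_ofNat]
    linear_combination (X - C c) * half_add_half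
  rw [← mul_zero 2, IsCherednikTriple.cartan, L.cornerMk_single T T.commute_s_euler, mul_zero,
    L.euler_single, half_mul_sum]

theorem aeval_cartan_single (L : IsLaurentRep c ρ s x ξ) (T : IsCherednikTriple c s x ξ)
    (f g : k[X]) :
    cornerRep T.isIdempotentElem ρ (aeval T.cartan f) (Finsupp.single 0 g) =
      Finsupp.single 0 (f.comp (X + C (1 / 2 - c)) * g) := by
  induction f using Polynomial.induction_on with
  | C a =>
    have one_act := L.one_single T 0 g
    rw [mul_zero] at one_act
    rw [aeval_C, Algebra.algebraMap_eq_smul_one, map_smul, LinearMap.smul_apply, one_act, C_comp,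
      Finsupp.smul_single, C_mul']
  | add f₁ f₂ h₁ h₂ =>
    rw [map_add, map_add, LinearMap.add_apply, h₁, h₂, add_comp, add_mul, Finsupp.single_add]
  | monomial n a ih =>
    rw [pow_succ', ← mul_assoc, mul_comm (C a) X, mul_assoc, map_mul, aeval_X,
      map_mul (cornerRep T.isIdempotentElem ρ), Module.End.mul_apply, ih, L.cartan_single T,
      mul_comp X, X_comp, mul_assoc]

theorem exists_ePlus_pow_single (L : IsLaurentRep c ρ s x ξ) (T : IsCherednikTriple c s x ξ)
    (n : ℕ) :
    ∃ κ : k[X], κ ≠ 0 ∧ ∀ g,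
      cornerRep T.isIdempotentElem ρ (T.ePlus ^ n) (Finsupp.single 0 g) =
        Finsupp.single (2 * (n : ℤ)) (κ * g) := by
  induction n with
  | zero =>
    refine ⟨1, one_ne_zero, fun g => ?_⟩
    rw [pow_zero, Nat.cast_zero, one_mul, ← L.one_single T, mul_zero]
  | succ n ih =>
    obtain ⟨κ, hκ, hn⟩ := ih
    refine ⟨C (1 / 2) * κ, mul_ne_zero (by simp [two_ne_zero]) hκ, fun g => ?_⟩
    rw [pow_succ', map_mul, Module.End.mul_apply, hn, L.ePlus_single T, mul_assoc,
      Nat.cast_succ]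

theorem exists_eMinus_pow_single (L : IsLaurentRep c ρ s x ξ) (T : IsCherednikTriple c s x ξ)
    (n : ℕ) :
    ∃ κ : k[X], κ ≠ 0 ∧ ∀ g,
      cornerRep T.isIdempotentElem ρ (T.eMinus ^ n) (Finsupp.single 0 g) =
        Finsupp.single (2 * (-n : ℤ)) (κ * g) := by
  induction n with
  | zero =>
    refine ⟨1, one_ne_zero, fun g => ?_⟩
    rw [pow_zero, Nat.cast_zero, neg_zero, one_mul, ← L.one_single T, mul_zero]
  | succ n ih =>
    obtain ⟨κ, hκ, hn⟩ := ih
    refine ⟨C (-(1 / 2)) * (dunkl c (2 * (-n : ℤ) - 1) * dunkl c (2 * (-n : ℤ))) * κ, ?_,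
      fun g => ?_⟩
    · exact mul_ne_zero (mul_ne_zero (by simp [two_ne_zero])
        (mul_ne_zero (dunkl_ne_zero _ _) (dunkl_ne_zero _ _))) hκ
    · rw [pow_succ', map_mul, Module.End.mul_apply, hn, L.eMinus_single T, ← mul_assoc,
        Nat.cast_succ, neg_add']

theorem exists_weightMonomial_single (L : IsLaurentRep c ρ s x ξ) (T : IsCherednikTriple c s x ξ)
    (n : ℤ) :
    ∃ κ : k[X], κ ≠ 0 ∧ ∀ g,
      cornerRep T.isIdempotentElem ρ (weightMonomial T.ePlus T.eMinus n) (Finsupp.single 0 g) =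
        Finsupp.single (2 * n) (κ * g) := by
  obtain ⟨n, rfl | rfl⟩ := n.eq_nat_or_neg
  · simpa only [weightMonomial_natCast] using L.exists_ePlus_pow_single T n
  · simpa only [weightMonomial_neg_natCast] using L.exists_eMinus_pow_single T n

theorem exists_weightSum_apply (L : IsLaurentRep c ρ s x ξ) (T : IsCherednikTriple c s x ξ) :
    ∃ κ : ℤ → k[X], (∀ n, κ n ≠ 0) ∧ ∀ (f : ℤ →₀ k[X]) (n : ℤ),
      cornerRep T.isIdempotentElem ρ (weightSum T.ePlus T.cartan T.eMinus f) (Finsupp.single 0 1)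
        (2 * n) = κ n * taylor (1 / 2 - c) (f n) := by
  choose κ hκ hact using L.exists_weightMonomial_single T
  refine ⟨κ, hκ, fun f n => ?_⟩
  induction f using Finsupp.induction_linear with
  | zero => simp only [map_zero, LinearMap.zero_apply, Finsupp.zero_apply, mul_zero]
  | add f g hf hg =>
    simp only [map_add, LinearMap.add_apply, Finsupp.add_apply, hf, hg, mul_add]
  | single m g =>
    rw [weightSum_single, map_mul (cornerRep T.isIdempotentElem ρ), Module.End.mul_apply,
      L.aeval_cartan_single T, hact, mul_one, ← taylor_apply]
    rcases eq_or_ne n m with rfl | hnm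
    · rw [Finsupp.single_eq_same, Finsupp.single_eq_same]
    · rw [Finsupp.single_eq_of_ne hnm, map_zero, mul_zero,
        Finsupp.single_eq_of_ne (mul_right_injective₀ two_ne_zero |>.ne hnm)]

theorem weightSum_injective (L : IsLaurentRep c ρ s x ξ) (T : IsCherednikTriple c s x ξ) :
    Function.Injective (weightSum (k := k) T.ePlus T.cartan T.eMinus) := by
  obtain ⟨κ, hκ, hcoeff⟩ := L.exists_weightSum_apply T
  intro f g hfg
  ext1 n
  have key := hcoeff f n
  rw [hfg, hcoeff g n] at key
  exact (taylor_injective _ (mul_left_cancel₀ (hκ n) key)).symm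

end IsLaurentRep

end LaurentRepresentation

section Presentations

theorem CherednikA1.isCherednikTriple (c : ℂ) :
    IsCherednikTriple c (CherednikA1.S 1 c) (CherednikA1.x 1 c) (CherednikA1.xi 1 c) where
  s_mul_s := by
    have rel := RingQuot.mkAlgHom_rel ℂ (CherednikRel.s_sq (t := 1) (c := c))
    rw [map_sub, map_mul, map_one, map_zero] at rel
    exact sub_eq_zero.mp rel
  s_mul_x := by
    have rel := RingQuot.mkAlgHom_rel ℂ (CherednikRel.s_x (t := 1) (c := c))
    rw [map_add, map_mul, map_mul, map_zero] at rel
    exact eq_neg_of_add_eq_zero_left rel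
  s_mul_ξ := by
    have rel := RingQuot.mkAlgHom_rel ℂ (CherednikRel.s_xi (t := 1) (c := c))
    rw [map_add, map_mul, map_mul, map_zero] at rel
    exact eq_neg_of_add_eq_zero_left rel
  lie_ξ_x := by
    have rel := RingQuot.mkAlgHom_rel ℂ (CherednikRel.xi_x (t := 1) (c := c))
    rw [map_add, map_sub, map_sub, map_mul, map_mul, map_one, map_one, map_zero, map_smul,
      sub_add] at rel
    exact sub_eq_zero.mp rel

theorem CherednikA1.adjoin_eq_top (t c : ℂ) :
    Algebra.adjoin ℂ {CherednikA1.S t c, CherednikA1.x t c, CherednikA1.xi t c} = ⊤ := by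
  rw [← adjoin_range_mkAlgHom_ι (CherednikRel t c)]
  congr 1
  ext a
  simp [Fin.exists_fin_succ, eq_comm, CherednikA1.S, CherednikA1.x, CherednikA1.xi]

/-- The generators `e₊`, `h`, `e₋` of `U(sl₂)/⟨C - λ⟩`, in this order. -/
noncomputable def Sl2CasimirQuot.gen (lam : ℂ) (i : Fin 3) : Sl2CasimirQuot lam :=
  RingQuot.mkAlgHom ℂ (Sl2CasimirRel lam) (ι ℂ i)

theorem Sl2CasimirQuot.isCasimirTriple (lam : ℂ) :
    IsCasimirTriple lam (gen lam 0) (gen lam 1) (gen lam 2) where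
  lie_h_p := by
    have rel := RingQuot.mkAlgHom_rel ℂ (Sl2CasimirRel.h_ep (lam := lam))
    rw [map_sub, map_sub, map_mul, map_mul, map_smul, map_zero] at rel
    exact sub_eq_zero.mp rel
  lie_h_q := by
    have rel := RingQuot.mkAlgHom_rel ℂ (Sl2CasimirRel.h_em (lam := lam))
    rw [map_add, map_sub, map_mul, map_mul, map_smul, map_zero] at rel
    exact eq_neg_of_add_eq_zero_left rel
  lie_p_q := by
    have rel := RingQuot.mkAlgHom_rel ℂ (Sl2CasimirRel.ep_em (lam := lam))
    rw [map_sub, map_sub, map_mul, map_mul, map_zero] at rel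
    exact sub_eq_zero.mp rel
  casimir := by
    have rel := RingQuot.mkAlgHom_rel ℂ (Sl2CasimirRel.casimir (lam := lam))
    rw [map_sub, map_add, map_add, map_smul, map_mul, map_mul, map_mul, map_zero, sub_eq_zero,
      AlgHom.commutes, Algebra.algebraMap_eq_smul_one] at rel
    exact rel

theorem Sl2CasimirQuot.adjoin_eq_top (lam : ℂ) :
    Algebra.adjoin ℂ {gen lam 0, gen lam 1, gen lam 2} = ⊤ := by
  rw [← adjoin_range_mkAlgHom_ι (Sl2CasimirRel lam)]
  congr 1
  ext a
  simp [Fin.exists_fin_succ, eq_comm, gen]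

variable {A : Type*} [Ring A] [Algebra ℂ A]

/-- The representation of `H_{1,c}` given by elements satisfying its defining relations. -/
noncomputable def IsCherednikTriple.lift {c : ℂ} {s x ξ : A} (T : IsCherednikTriple c s x ξ) :
    CherednikA1 1 c →ₐ[ℂ] A :=
  RingQuot.liftAlgHom ℂ ⟨FreeAlgebra.lift ℂ ![s, x, ξ], fun a b r => by
    cases r with
    | s_sq => simp [T.s_mul_s]
    | s_x => simp [T.s_mul_x]
    | s_xi => simp [T.s_mul_ξ]
    | xi_x => simp [(Ring.lie_def ξ x).symm.trans T.lie_ξ_x]⟩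

theorem CherednikA1.isLaurentRep (c : ℂ) :
    IsLaurentRep c (isCherednikTriple_laurent c).lift
      (CherednikA1.S 1 c) (CherednikA1.x 1 c) (CherednikA1.xi 1 c) where
  map_s := by simp [CherednikA1.S, IsCherednikTriple.lift]
  map_x := by simp [CherednikA1.x, IsCherednikTriple.lift]
  map_ξ := by simp [CherednikA1.xi, IsCherednikTriple.lift]

namespace IsCasimirTriple

variable {lam : ℂ} {p h q : A}

/-- The homomorphism from `U(sl₂)/⟨C - λ⟩` given by elements satisfying its defining relations. -/
noncomputable def lift (T : IsCasimirTriple lam p h q) : Sl2CasimirQuot lam →ₐ[ℂ] A :=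
  RingQuot.liftAlgHom ℂ ⟨FreeAlgebra.lift ℂ ![p, h, q], fun a b r => by
    cases r with
    | h_ep => simp [(Ring.lie_def h p).symm.trans T.lie_h_p]
    | h_em => simp [(Ring.lie_def h q).symm.trans T.lie_h_q]
    | ep_em => simp [(Ring.lie_def p q).symm.trans T.lie_p_q]
    | casimir =>
      have := T.casimir
      rw [← Algebra.algebraMap_eq_smul_one, ← sub_eq_zero] at this
      simpa using this⟩

theorem lift_gen (T : IsCasimirTriple lam p h q) (i : Fin 3) :
    T.lift (Sl2CasimirQuot.gen lam i) = ![p, h, q] i := by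
  rw [lift, Sl2CasimirQuot.gen, RingQuot.liftAlgHom_mkAlgHom_apply, FreeAlgebra.lift_ι_apply]

theorem lift_injective (T : IsCasimirTriple lam p h q)
    (hT : Function.Injective (weightSum (k := ℂ) p h q)) : Function.Injective T.lift := by
  have lift_comp_weightSum : T.lift.toLinearMap ∘ₗ weightSum (Sl2CasimirQuot.gen lam 0)
      (Sl2CasimirQuot.gen lam 1) (Sl2CasimirQuot.gen lam 2) = weightSum p h q := by
    simp only [comp_weightSum, lift_gen, Matrix.cons_val]
  rw [← lift_comp_weightSum, LinearMap.coe_comp] at hT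
  exact hT.of_comp_right ((Sl2CasimirQuot.isCasimirTriple lam).weightSum_surjective
    (Sl2CasimirQuot.adjoin_eq_top lam))

theorem lift_surjective (T : IsCasimirTriple lam p h q) (hT : Algebra.adjoin ℂ {p, h, q} = ⊤) :
    Function.Surjective T.lift := by
  rw [← AlgHom.range_eq_top, eq_top_iff, ← hT, Algebra.adjoin_le_iff]
  rintro _ (rfl | rfl | rfl)
  exacts [⟨_, T.lift_gen 0⟩, ⟨_, T.lift_gen 1⟩, ⟨_, T.lift_gen 2⟩]

end IsCasimirTriple

end Presentations

/-- The spherical subalgebra `B_{1,c} = e H_{1,c} e` of type `A₁` is isomorphic, as a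
ℂ-algebra with unit `e`, to `U(sl₂(ℂ))/⟨C - (1/2)(c - 1/2)(c + 3/2)⟩`, with the image
of `e₊` sent to `(1/2) e x² e` and the image of `e₋` sent to `-(1/2) e ξ² e`. -/
theorem spherical_A1_iso_sl2 (c : ℂ) :
    ∃ φ : Sl2CasimirQuot ((1/2 : ℂ) * (c - 1/2) * (c + 3/2)) →ₗ[ℂ] CherednikA1 1 c,
      Function.Injective φ ∧
      Set.range φ = {z : CherednikA1 1 c | CherednikA1.e 1 c * z * CherednikA1.e 1 c = z} ∧
      φ 1 = CherednikA1.e 1 c ∧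
      (∀ a b, φ (a * b) = φ a * φ b) ∧
      φ (RingQuot.mkAlgHom ℂ (Sl2CasimirRel ((1/2 : ℂ) * (c - 1/2) * (c + 3/2)))
          (ι ℂ (0 : Fin 3))) =
        (1/2 : ℂ) • (CherednikA1.e 1 c * CherednikA1.x 1 c * CherednikA1.x 1 c *
          CherednikA1.e 1 c) ∧
      φ (RingQuot.mkAlgHom ℂ (Sl2CasimirRel ((1/2 : ℂ) * (c - 1/2) * (c + 3/2)))
          (ι ℂ (2 : Fin 3))) =
        (-(1/2) : ℂ) • (CherednikA1.e 1 c * CherednikA1.xi 1 c * CherednikA1.xi 1 c *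
          CherednikA1.e 1 c) := by
  have T := CherednikA1.isCherednikTriple c
  have P := T.isCasimirTriple
  let j := cornerSubtype ℂ T.isIdempotentElem
  have lift_injective := P.lift_injective ((CherednikA1.isLaurentRep c).weightSum_injective T)
  have lift_surjective :=
    P.lift_surjective (T.adjoin_sl2_eq_top (CherednikA1.adjoin_eq_top 1 c))
  refine ⟨(j : _ →ₗ[ℂ] CherednikA1 1 c) ∘ₗ P.lift.toLinearMap,
    (cornerSubtype_injective (k := ℂ) T.isIdempotentElem).comp lift_injective, ?_, ?_, ?_, ?_, ?_⟩
  · exact (lift_surjective.range_comp j).trans (range_cornerSubtype T.isIdempotentElem)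
  · exact (congrArg j (map_one P.lift)).trans (cornerSubtype_one _)
  · exact fun a b => (congrArg j (map_mul P.lift a b)).trans (map_mul j _ _)
  · calc j (P.lift _) = j T.ePlus := congrArg j (P.lift_gen 0)
      _ = CherednikA1.e 1 c * ((1 / 2 : ℂ) • CherednikA1.x 1 c ^ 2) * CherednikA1.e 1 c := rfl
      _ = _ := by rw [mul_smul_comm, smul_mul_assoc, pow_two, ← mul_assoc]
  · calc j (P.lift _) = j T.eMinus := congrArg j (P.lift_gen 2)
      _ = CherednikA1.e 1 c * ((-(1 / 2) : ℂ) • CherednikA1.xi 1 c ^ 2) * CherednikA1.e 1 c := rfl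
      _ = _ := by rw [mul_smul_comm, smul_mul_assoc, pow_two, ← mul_assoc]
end
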